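/- Every ω-standard model of MOST + Π1-Collection satisfies Σ1^P-Foundation. -/

import Mathlib

universe u

/-- de Bruijn-style formulas of the language of set theory, with primitive
bounded quantifiers (`∈`-bounded and `⊆`-bounded) and unbounded quantifiers.
`SF n` is the type of formulas with (at most) `n` free variables. -/
inductive SF : ℕ → Type
  | mem {n} (i j : Fin n) : SF n
  | eq {n} (i j : Fin n) : SF n
  | not {n} (φ : SF n) : SF n
  | and {n} (φ ψ : SF n) : SF n
  | or {n} (φ ψ : SF n) : SF n
  | bexMem {n} (i : Fin n) (φ : SF (n + 1)) : SF n
  | ballMem {n} (i : Fin n) (φ : SF (n + 1)) : SF n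
  | bexSub {n} (i : Fin n) (φ : SF (n + 1)) : SF n
  | ballSub {n} (i : Fin n) (φ : SF (n + 1)) : SF n
  | ex {n} (φ : SF (n + 1)) : SF n
  | all {n} (φ : SF (n + 1)) : SF n

variable {X : Type u}

/-- `a ⊆ b` in the structure `⟨X, E⟩`. -/
def SubE (E : X → X → Prop) (a b : X) : Prop := ∀ z, E z a → E z b

/-- Satisfaction of a formula in the structure `⟨X, E⟩` under a valuation. -/
def SF.Eval (E : X → X → Prop) : {n : ℕ} → SF n → (Fin n → X) → Prop
  | _, .mem i j, v => E (v i) (v j)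
  | _, .eq i j, v => v i = v j
  | _, .not φ, v => ¬ φ.Eval E v
  | _, .and φ ψ, v => φ.Eval E v ∧ ψ.Eval E v
  | _, .or φ ψ, v => φ.Eval E v ∨ ψ.Eval E v
  | _, .bexMem i φ, v => ∃ x, E x (v i) ∧ φ.Eval E (Fin.snoc v x)
  | _, .ballMem i φ, v => ∀ x, E x (v i) → φ.Eval E (Fin.snoc v x)
  | _, .bexSub i φ, v => ∃ x, SubE E x (v i) ∧ φ.Eval E (Fin.snoc v x)
  | _, .ballSub i φ, v => ∀ x, SubE E x (v i) → φ.Eval E (Fin.snoc v x)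
  | _, .ex φ, v => ∃ x, φ.Eval E (Fin.snoc v x)
  | _, .all φ, v => ∀ x, φ.Eval E (Fin.snoc v x)

/-- `Δ₀` formulas: only `∈`-bounded quantifiers. -/
def SF.IsDelta0 : {n : ℕ} → SF n → Prop
  | _, .mem _ _ => True
  | _, .eq _ _ => True
  | _, .not φ => φ.IsDelta0
  | _, .and φ ψ => φ.IsDelta0 ∧ ψ.IsDelta0
  | _, .or φ ψ => φ.IsDelta0 ∧ ψ.IsDelta0
  | _, .bexMem _ φ => φ.IsDelta0
  | _, .ballMem _ φ => φ.IsDelta0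
  | _, .bexSub _ _ => False
  | _, .ballSub _ _ => False
  | _, .ex _ => False
  | _, .all _ => False

/-- Takahashi's class `Δ₀^𝒫`: only `∈`-bounded and `⊆`-bounded quantifiers. -/
def SF.IsDelta0P : {n : ℕ} → SF n → Prop
  | _, .mem _ _ => True
  | _, .eq _ _ => True
  | _, .not φ => φ.IsDelta0P
  | _, .and φ ψ => φ.IsDelta0P ∧ ψ.IsDelta0P
  | _, .or φ ψ => φ.IsDelta0P ∧ ψ.IsDelta0P
  | _, .bexMem _ φ => φ.IsDelta0P
  | _, .ballMem _ φ => φ.IsDelta0P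
  | _, .bexSub _ φ => φ.IsDelta0P
  | _, .ballSub _ φ => φ.IsDelta0P
  | _, .ex _ => False
  | _, .all _ => False

def Delta0C : ∀ n, SF n → Prop := fun _ φ => φ.IsDelta0
def Delta0PC : ∀ n, SF n → Prop := fun _ φ => φ.IsDelta0P
def Sigma1C : ∀ n, SF n → Prop := fun _ φ => ∃ ψ, ψ.IsDelta0 ∧ φ = SF.ex ψ
def Pi1C : ∀ n, SF n → Prop := fun _ φ => ∃ ψ, ψ.IsDelta0 ∧ φ = SF.all ψ
def Sigma1PC : ∀ n, SF n → Prop := fun _ φ => ∃ ψ, ψ.IsDelta0P ∧ φ = SF.ex ψ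
def Pi1PC : ∀ n, SF n → Prop := fun _ φ => ∃ ψ, ψ.IsDelta0P ∧ φ = SF.all ψ
def FullC : ∀ n, SF n → Prop := fun _ _ => True

/-- A Gödel numbering of formulas. -/
def SF.encode : {n : ℕ} → SF n → ℕ
  | _, .mem i j => Nat.pair 0 (Nat.pair i.val j.val)
  | _, .eq i j => Nat.pair 1 (Nat.pair i.val j.val)
  | _, .not φ => Nat.pair 2 φ.encode
  | _, .and φ ψ => Nat.pair 3 (Nat.pair φ.encode ψ.encode)
  | _, .or φ ψ => Nat.pair 4 (Nat.pair φ.encode ψ.encode)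
  | _, .bexMem i φ => Nat.pair 5 (Nat.pair i.val φ.encode)
  | _, .ballMem i φ => Nat.pair 6 (Nat.pair i.val φ.encode)
  | _, .bexSub i φ => Nat.pair 7 (Nat.pair i.val φ.encode)
  | _, .ballSub i φ => Nat.pair 8 (Nat.pair i.val φ.encode)
  | _, .ex φ => Nat.pair 9 φ.encode
  | _, .all φ => Nat.pair 10 φ.encode

/-- A theory (set of sentences) is recursively enumerable if the set of Gödel
numbers of its members is the domain of a partial recursive function. -/
def REset (S : Set (SF 0)) : Prop :=
  ∃ f : ℕ →. ℕ, Nat.Partrec f ∧ ∀ φ : SF 0, φ ∈ S ↔ SF.encode φ ∈ f.Dom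

/-- `⟨X, E⟩ ⊨ S` for a set `S` of sentences. -/
def SatT (E : X → X → Prop) (S : Set (SF 0)) : Prop :=
  ∀ φ ∈ S, SF.Eval E φ (fun i => i.elim0)

/-! ## Axioms and axiom schemes -/

def ExtensionalityAx (E : X → X → Prop) : Prop := ∀ a b, (∀ z, E z a ↔ E z b) → a = b
def EmptySetAx (E : X → X → Prop) : Prop := ∃ a, ∀ z, ¬ E z a
def PairAx (E : X → X → Prop) : Prop := ∀ x y, ∃ a, ∀ z, E z a ↔ (z = x ∨ z = y)
def UnionAx (E : X → X → Prop) : Prop := ∀ a, ∃ b, ∀ z, E z b ↔ ∃ y, E y a ∧ E z y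
def SetDiffAx (E : X → X → Prop) : Prop := ∀ a b, ∃ c, ∀ z, E z c ↔ (E z a ∧ ¬ E z b)
def PowerAx (E : X → X → Prop) : Prop := ∀ a, ∃ p, ∀ z, E z p ↔ SubE E z a
def TransSet (E : X → X → Prop) (t : X) : Prop := ∀ y, E y t → ∀ z, E z y → E z t
def TCoAx (E : X → X → Prop) : Prop := ∀ a, ∃ t, TransSet E t ∧ SubE E a t
def SuccOf (E : X → X → Prop) (x s : X) : Prop := ∀ z, E z s ↔ (E z x ∨ z = x)
def InductiveSet (E : X → X → Prop) (a : X) : Prop :=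
  (∃ e, E e a ∧ ∀ z, ¬ E z e) ∧ ∀ x, E x a → ∃ s, E s a ∧ SuccOf E x s
def InfinityAx (E : X → X → Prop) : Prop := ∃ a, InductiveSet E a
def SetFoundationAx (E : X → X → Prop) : Prop :=
  ∀ z, (∃ x, E x z) → ∃ y, E y z ∧ ∀ x, E x y → ¬ E x z
/-- The axiom of choice: every set of pairwise disjoint nonempty sets has a transversal. -/
def ACAx (E : X → X → Prop) : Prop :=
  ∀ a, (∀ x, E x a → ∃ z, E z x) →
    (∀ x y, E x a → E y a → x ≠ y → ∀ z, E z x → ¬ E z y) →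
    ∃ c, ∀ x, E x a → ∃! z, E z c ∧ E z x

def SeparationScheme (E : X → X → Prop) (C : ∀ n, SF n → Prop) : Prop :=
  ∀ (n : ℕ) (φ : SF (n + 1)), C _ φ → ∀ (p : Fin n → X) (w : X),
    ∃ y, ∀ x, E x y ↔ (E x w ∧ φ.Eval E (Fin.snoc p x))

def CollectionScheme (E : X → X → Prop) (C : ∀ n, SF n → Prop) : Prop :=
  ∀ (n : ℕ) (φ : SF (n + 2)), C _ φ → ∀ (p : Fin n → X) (w : X),
    (∀ x, E x w → ∃ y, φ.Eval E (Fin.snoc (Fin.snoc p x) y)) →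
    ∃ c, ∀ x, E x w → ∃ y, E y c ∧ φ.Eval E (Fin.snoc (Fin.snoc p x) y)

def FoundationScheme (E : X → X → Prop) (C : ∀ n, SF n → Prop) : Prop :=
  ∀ (n : ℕ) (φ : SF (n + 1)), C _ φ → ∀ p : Fin n → X,
    (∃ x, φ.Eval E (Fin.snoc p x)) →
    ∃ y, φ.Eval E (Fin.snoc p y) ∧ ∀ x, E x y → ¬ φ.Eval E (Fin.snoc p x)

/-! ## Theories -/

def ModelMminus (E : X → X → Prop) : Prop :=
  ExtensionalityAx E ∧ EmptySetAx E ∧ PairAx E ∧ UnionAx E ∧ SetDiffAx E ∧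
    TCoAx E ∧ InfinityAx E ∧ SeparationScheme E Delta0C ∧ SetFoundationAx E

def ModelM (E : X → X → Prop) : Prop := ModelMminus E ∧ PowerAx E

def ModelKP (E : X → X → Prop) : Prop :=
  ExtensionalityAx E ∧ PairAx E ∧ UnionAx E ∧ SeparationScheme E Delta0C ∧
    CollectionScheme E Delta0C ∧ FoundationScheme E Pi1C

def ModelKPP (E : X → X → Prop) : Prop :=
  ModelM E ∧ CollectionScheme E Delta0PC ∧ FoundationScheme E Pi1PC

def ModelMOST (E : X → X → Prop) : Prop :=
  ModelM E ∧ SeparationScheme E Sigma1C ∧ ACAx E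

def ModelZF (E : X → X → Prop) : Prop :=
  ExtensionalityAx E ∧ EmptySetAx E ∧ PairAx E ∧ UnionAx E ∧ PowerAx E ∧
    InfinityAx E ∧ SeparationScheme E FullC ∧ CollectionScheme E FullC ∧
    FoundationScheme E FullC

/-! ## Internal set-theoretic machinery -/

/-- `p = {{x}, {x, y}}` (Kuratowski pair). -/
def IsPair (E : X → X → Prop) (p x y : X) : Prop :=
  ∀ z, E z p ↔ ((∀ w, E w z ↔ w = x) ∨ (∀ w, E w z ↔ (w = x ∨ w = y)))

def FunApp (E : X → X → Prop) (f x y : X) : Prop := ∃ q, E q f ∧ IsPair E q x y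

/-- `f` is a function with domain `d`. -/
def IsFuncOn (E : X → X → Prop) (f d : X) : Prop :=
  (∀ q, E q f → ∃ x y, IsPair E q x y ∧ E x d) ∧
  (∀ x y y', FunApp E f x y → FunApp E f x y' → y = y') ∧
  (∀ x, E x d → ∃ y, FunApp E f x y)

/-- `f` is an injective function from `dom` into `cod`. -/
def InjFunInto (E : X → X → Prop) (f dom cod : X) : Prop :=
  IsFuncOn E f dom ∧ (∀ x y, FunApp E f x y → E y cod) ∧
  (∀ x x' y, FunApp E f x y → FunApp E f x' y → x = x')

/-- `|t| ≤ |κ|`. -/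
def CardLe (E : X → X → Prop) (t κ : X) : Prop := ∃ f, InjFunInto E f t κ

def IsOrdinal (E : X → X → Prop) (x : X) : Prop :=
  TransSet E x ∧ ∀ y, E y x → TransSet E y

/-- An (initial ordinal =) cardinal: an ordinal that does not inject into any of
its members. -/
def IsCardinal (E : X → X → Prop) (κ : X) : Prop :=
  IsOrdinal E κ ∧ ∀ β, E β κ → ¬ CardLe E κ β

/-- `t` is the transitive closure of the set `x`. -/
def IsTCset (E : X → X → Prop) (t x : X) : Prop :=
  TransSet E t ∧ SubE E x t ∧ ∀ u, TransSet E u → SubE E x u → SubE E t u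

/-- `t` is the transitive closure of `{x}`. -/
def IsTCsingleton (E : X → X → Prop) (t x : X) : Prop :=
  TransSet E t ∧ E x t ∧ ∀ u, TransSet E u → E x u → SubE E t u

def IsOmega (E : X → X → Prop) (w : X) : Prop :=
  InductiveSet E w ∧ ∀ a, InductiveSet E a → SubE E w a

/-- `⟨X, E⟩` is `ω`-standard: its internal natural numbers are order-isomorphic
to the standard natural numbers. -/
def OmegaStandard (E : X → X → Prop) : Prop :=
  ∀ w, IsOmega E w → ∃ f : ℕ → X, (∀ n, E (f n) w) ∧ (∀ x, E x w → ∃ n, x = f n) ∧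
    ∀ m n : ℕ, (E (f m) (f n) ↔ m < n)

/-- `f` is (a function coding) the cumulative hierarchy `β ↦ V_β` for `β ∈ α`,
using `V_β = ⋃_{γ∈β} 𝒫(V_γ)`. -/
def IsRK (E : X → X → Prop) (α f : X) : Prop :=
  IsOrdinal E α ∧ IsFuncOn E f α ∧
  ∀ β vβ, E β α → FunApp E f β vβ →
    ∀ x, E x vβ ↔ ∃ γ, E γ β ∧ ∃ vγ, FunApp E f γ vγ ∧ SubE E x vγ

/-- Internal rank comparison `ρ(x) ≤ ρ(y)`: `x` belongs to every stage of the
cumulative hierarchy that `y` belongs to. -/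
def RankLe (E : X → X → Prop) (x y : X) : Prop :=
  ∀ α f β v, IsRK E α f → E β α → FunApp E f β v → E y v → E x v

/-- External `n`-th von Neumann natural number. -/
def IsVN (E : X → X → Prop) : ℕ → X → Prop
  | 0, x => ∀ z, ¬ E z x
  | (n + 1), x => ∃ y, IsVN E n y ∧ SuccOf E y x

/-- `a` is the `n`-th infinite cardinal `ℵ_n` (for external `n`, as computed in
the model): `ℵ₀ = ω`, and `ℵ_{n+1}` is the least cardinal above `ℵ_n`. -/
def IsAleph (E : X → X → Prop) : ℕ → X → Prop
  | 0, a => IsOmega E a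
  | (n + 1), a => ∃ b, IsAleph E n b ∧ IsCardinal E a ∧ E b a ∧
      ∀ c, IsCardinal E c → E b c → (c = a ∨ E a c)

/-- `a` is the cardinal `ℵ_ω` of the model: the least limit cardinal above `ω`. -/
def IsAlephOmega (E : X → X → Prop) (a : X) : Prop :=
  (IsCardinal E a ∧ (∃ w, IsOmega E w ∧ E w a) ∧
    (∀ β, E β a → ∃ μ, IsCardinal E μ ∧ E β μ ∧ E μ a)) ∧
  ∀ a', (IsCardinal E a' ∧ (∃ w, IsOmega E w ∧ E w a') ∧
    (∀ β, E β a' → ∃ μ, IsCardinal E μ ∧ E β μ ∧ E μ a')) → (a = a' ∨ E a a')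

/-! ## Internal satisfaction and the constructible hierarchy (for `V = L`) -/

/-- `c = ⟨n, a⟩` with the tag `n` an external natural (internally coded). -/
def TaggedBy (E : X → X → Prop) (c : X) (n : ℕ) (a : X) : Prop :=
  ∃ t, IsVN E n t ∧ IsPair E c t a

def CodeMem (E : X → X → Prop) (c i j : X) : Prop := ∃ p, IsPair E p i j ∧ TaggedBy E c 0 p
def CodeEq (E : X → X → Prop) (c i j : X) : Prop := ∃ p, IsPair E p i j ∧ TaggedBy E c 1 p
def CodeNot (E : X → X → Prop) (c' c : X) : Prop := TaggedBy E c' 2 c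
def CodeAnd (E : X → X → Prop) (c' c₁ c₂ : X) : Prop := ∃ p, IsPair E p c₁ c₂ ∧ TaggedBy E c' 3 p
def CodeEx (E : X → X → Prop) (c' i c : X) : Prop := ∃ p, IsPair E p i c ∧ TaggedBy E c' 4 p

/-- `d` is closed under the internal formation rules for codes of formulas with
variables indexed by elements of `w` (the internal `ω`). -/
def ClosedCode (E : X → X → Prop) (w d : X) : Prop :=
  (∀ i j c, E i w → E j w → CodeMem E c i j → E c d) ∧
  (∀ i j c, E i w → E j w → CodeEq E c i j → E c d) ∧
  (∀ c c', E c d → CodeNot E c' c → E c' d) ∧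
  (∀ c₁ c₂ c', E c₁ d → E c₂ d → CodeAnd E c' c₁ c₂ → E c' d) ∧
  (∀ i c c', E i w → E c d → CodeEx E c' i c → E c' d)

/-- `c` is an internal code of a first-order formula of the language of set theory. -/
def FormCode (E : X → X → Prop) (w c : X) : Prop := ∀ d, ClosedCode E w d → E c d

/-- An internal assignment of elements of `a` to the variables. -/
def IsAssign (E : X → X → Prop) (w a v : X) : Prop :=
  IsFuncOn E v w ∧ ∀ i y, FunApp E v i y → E y a

/-- `v' = v[i ↦ x]`. -/
def UpdateAssign (E : X → X → Prop) (w v : X) (i x v' : X) : Prop :=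
  FunApp E v' i x ∧ ∀ j, E j w → j ≠ i → ∀ y, (FunApp E v j y ↔ FunApp E v' j y)

def PairIn (E : X → X → Prop) (s c v : X) : Prop := ∃ q, E q s ∧ IsPair E q c v

/-- `s` is a (full) satisfaction class for the set structure `⟨a, E⟩`: a set of
pairs ⟨code, assignment⟩ obeying the Tarski conditions. -/
def SatSet (E : X → X → Prop) (w a s : X) : Prop :=
  (∀ q, E q s → ∃ c v, IsPair E q c v ∧ FormCode E w c ∧ IsAssign E w a v) ∧
  (∀ i j c v xi xj, E i w → E j w → CodeMem E c i j → IsAssign E w a v →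
    FunApp E v i xi → FunApp E v j xj → (PairIn E s c v ↔ E xi xj)) ∧
  (∀ i j c v xi xj, E i w → E j w → CodeEq E c i j → IsAssign E w a v →
    FunApp E v i xi → FunApp E v j xj → (PairIn E s c v ↔ xi = xj)) ∧
  (∀ c c' v, FormCode E w c → CodeNot E c' c → IsAssign E w a v →
    (PairIn E s c' v ↔ ¬ PairIn E s c v)) ∧
  (∀ c₁ c₂ c' v, FormCode E w c₁ → FormCode E w c₂ → CodeAnd E c' c₁ c₂ →
    IsAssign E w a v → (PairIn E s c' v ↔ (PairIn E s c₁ v ∧ PairIn E s c₂ v))) ∧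
  (∀ i c c' v, E i w → FormCode E w c → CodeEx E c' i c → IsAssign E w a v →
    (PairIn E s c' v ↔ ∃ x v', E x a ∧ IsAssign E w a v' ∧ UpdateAssign E w v i x v' ∧
      PairIn E s c v'))

/-- `b` is a subset of `a` definable over `⟨a, E⟩` (with parameters from `a`). -/
def DefSub (E : X → X → Prop) (w a s b : X) : Prop :=
  SubE E b a ∧ ∃ c, FormCode E w c ∧ ∃ v, IsAssign E w a v ∧ ∃ i, E i w ∧
    ∀ x, E x b ↔ (E x a ∧ ∃ v', IsAssign E w a v' ∧ UpdateAssign E w v i x v' ∧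
      PairIn E s c v')

/-- `f` codes the constructible hierarchy `β ↦ L_β` for `β ∈ α`, using
`L_β = ⋃_{γ∈β} Def(L_γ)`. -/
def IsLHier (E : X → X → Prop) (w f α : X) : Prop :=
  IsOrdinal E α ∧ IsFuncOn E f α ∧
  ∀ β vβ, E β α → FunApp E f β vβ →
    ∀ x, E x vβ ↔ ∃ γ, E γ β ∧ ∃ vγ, FunApp E f γ vγ ∧ ∃ s, SatSet E w vγ s ∧
      DefSub E w vγ s x

/-- The axiom `V = L`: every set belongs to some level of the constructible hierarchy. -/
def VeqL (E : X → X → Prop) : Prop :=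
  ∀ w, IsOmega E w → ∀ x, ∃ α f β vβ, IsLHier E w f α ∧ E β α ∧ FunApp E f β vβ ∧ E x vβ

/-! ## Extensions -/

/-- The substructure of `⟨X, E⟩` with underlying set `A`. -/
def restrict (E : X → X → Prop) (A : Set X) : A → A → Prop := fun a b => E a.1 b.1

/-- `B` is an end extension of `A` (both substructures of an ambient `⟨X, E⟩`). -/
def EndExtIn (E : X → X → Prop) (A B : Set X) : Prop :=
  A ⊆ B ∧ ∀ x y, x ∈ B → y ∈ A → E x y → x ∈ A

/-- `B` is a powerset-preserving end extension of `A` (within an ambient `⟨X, E⟩`);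
`x ⊆ y` is computed in `B`. -/
def PowExtIn (E : X → X → Prop) (A B : Set X) : Prop :=
  EndExtIn E A B ∧ ∀ x y, x ∈ B → y ∈ A → (∀ z, z ∈ B → E z x → E z y) → x ∈ A

/-- The whole structure `⟨X, E⟩` is an end extension of its substructure on `A`. -/
def EndExtSet (E : X → X → Prop) (A : Set X) : Prop :=
  ∀ x y, y ∈ A → E x y → x ∈ A

/-- `⟨X, E⟩` is a powerset-preserving end extension of its substructure on `A`. -/
def PowExtSet (E : X → X → Prop) (A : Set X) : Prop :=
  EndExtSet E A ∧ ∀ x y, y ∈ A → SubE E x y → x ∈ A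

/-- `⟨X, E⟩` is a rank extension of its substructure on `A`. -/
def RankExtSet (E : X → X → Prop) (A : Set X) : Prop :=
  PowExtSet E A ∧ ∀ x y, y ∈ A → RankLe E x y → x ∈ A

/-- The extension `⟨X, E⟩` of its substructure on `A` is proper and topless. -/
def ToplessSet (E : X → X → Prop) (A : Set X) : Prop :=
  A ≠ Set.univ ∧ ∀ c, (∀ x, E x c → x ∈ A) → c ∈ A

/-- The extension `⟨X, E⟩` of its substructure on `A` is proper and blunt (not topless). -/
def BluntSet (E : X → X → Prop) (A : Set X) : Prop :=
  A ≠ Set.univ ∧ ¬ ToplessSet E A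

/-! ## Weak dependent choice -/

/-- `δ_ω^φ(b, f, p)`: `f` is a function on `ω` with `f(0) = {b}` tracing the
`φ`-successor relation. -/
def IsWDCWitness (E : X → X → Prop) {n : ℕ} (φ : SF (n + 2)) (p : Fin n → X)
    (w b f : X) : Prop :=
  IsFuncOn E f w ∧
  (∃ z v, (∀ u, ¬ E u z) ∧ E z w ∧ FunApp E f z v ∧ ∀ t, E t v ↔ t = b) ∧
  ∀ m m' vm vm', E m w → SuccOf E m m' → E m' w → FunApp E f m vm → FunApp E f m' vm' →
    ((∀ x, E x vm → ∃ y, E y vm' ∧ φ.Eval E (Fin.snoc (Fin.snoc p x) y)) ∧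
     (∀ y, E y vm' → ∀ x, E x vm → φ.Eval E (Fin.snoc (Fin.snoc p x) y)))

/-- The scheme `Δ₀^𝒫-WDC_ω`. -/
def WDComega (E : X → X → Prop) : Prop :=
  ∀ (n : ℕ) (φ : SF (n + 2)), Delta0PC _ φ → ∀ p : Fin n → X,
    (∀ x, ∃ y, φ.Eval E (Fin.snoc (Fin.snoc p x) y)) →
    ∀ w, IsOmega E w → ∀ b, ∃ f, IsWDCWitness E φ p w b f

/-! ## Internal well-founded extensional relations (for `H_{≤κ}`) -/

def RRel (E : X → X → Prop) (R a b : X) : Prop := ∃ p, E p R ∧ IsPair E p a b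

def RelOn (E : X → X → Prop) (R k : X) : Prop :=
  ∀ p, E p R → ∃ a b, IsPair E p a b ∧ E a k ∧ E b k

/-- `BFEXT(R, k)`: `R ⊆ k × k` is extensional on `k`, has a top element, and every
nonempty subset of `k` has an `R`-minimal element. -/
def BFEXT (E : X → X → Prop) (R k : X) : Prop :=
  RelOn E R k ∧
  (∀ a b, E a k → E b k → (∀ c, E c k → (RRel E R c a ↔ RRel E R c b)) → a = b) ∧
  (∃ t, E t k ∧ ∀ b, E b k → b ≠ t → RRel E R b t) ∧
  (∀ S, SubE E S k → (∃ z, E z S) → ∃ m, E m S ∧ ∀ y, E y S → ¬ RRel E R y m)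

/-- `f` is an isomorphism of `⟨k, R⟩` with `⟨T, ∈⟩`. -/
def IsoOnto (E : X → X → Prop) (R k f T : X) : Prop :=
  IsFuncOn E f k ∧ (∀ x y, FunApp E f x y → E y T) ∧
  (∀ y, E y T → ∃ x, E x k ∧ FunApp E f x y) ∧
  (∀ x x' y, FunApp E f x y → FunApp E f x' y → x = x') ∧
  ∀ a b ya yb, E a k → E b k → FunApp E f a ya → FunApp E f b yb →
    (RRel E R a b ↔ E ya yb)

/-- The predicate `Xv = H_{≤κ} = {x : |TC(x)| ≤ κ}`. -/
def HleqPred (E : X → X → Prop) (Xv κ : X) : Prop :=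
  IsCardinal E κ ∧ ∀ x, E x Xv ↔ ∃ t, IsTCset E t x ∧ CardLe E t κ

/-- The explicit conjunction (i) ∧ (ii) ∧ (iii) asserting `Xv = H_{≤κ}`. -/
def ExplicitH (E : X → X → Prop) (Xv κ : X) : Prop :=
  IsCardinal E κ ∧
  (∀ R, BFEXT E R κ → ∃ x f T, E x Xv ∧ E f Xv ∧ E T Xv ∧ IsTCsingleton E T x ∧
    IsoOnto E R κ f T) ∧
  (∀ x, E x Xv → ∃ T f, E T Xv ∧ E f Xv ∧ IsTCsingleton E T x ∧ InjFunInto E f T κ)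

/-! ## Helper material: semantic definability -/

section Helper

set_option linter.unusedVariables false

/-- Extend an environment by a new variable `0`. -/
def econs (x : X) (v : ℕ → X) : ℕ → X
  | 0 => x
  | n + 1 => v n

/-- Drop variable `0`. -/
def tl (v : ℕ → X) : ℕ → X := fun n => v (n + 1)

theorem econs_tl (v : ℕ → X) : econs (v 0) (tl v) = v := by
  funext n; cases n <;> rfl

inductive Tm : ((ℕ → X) → X) → Prop
  | var (i : ℕ) : Tm (fun v => v i)
  | const (c : X) : Tm (fun _ => c)

theorem Tm.comp {f : (ℕ → X) → X} (hf : Tm f) {τ : ℕ → (ℕ → X) → X} (hτ : ∀ i, Tm (τ i)) :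
    Tm (fun v => f (fun i => τ i v)) := by
  cases hf with
  | var i => exact hτ i
  | const c => exact Tm.const c

theorem Tm.tl {f : (ℕ → X) → X} (hf : Tm f) : Tm (fun v => f (tl v)) :=
  hf.comp (τ := fun i v => v (i + 1)) (fun i => Tm.var (i + 1))

/-- Lift a substitution below a quantifier. -/
def liftS (τ : ℕ → (ℕ → X) → X) : ℕ → (ℕ → X) → X
  | 0 => fun v => v 0
  | n + 1 => fun v => τ n (tl v)

theorem liftS_tm {τ : ℕ → (ℕ → X) → X} (hτ : ∀ i, Tm (τ i)) : ∀ i, Tm (liftS τ i)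
  | 0 => Tm.var 0
  | n + 1 => (hτ n).tl

inductive D0 (E : X → X → Prop) : ((ℕ → X) → Prop) → Prop
  | mem {f g} : Tm f → Tm g → D0 E (fun v => E (f v) (g v))
  | eq {f g} : Tm f → Tm g → D0 E (fun v => f v = g v)
  | not {P} : D0 E P → D0 E (fun v => ¬ P v)
  | and {P Q} : D0 E P → D0 E Q → D0 E (fun v => P v ∧ Q v)
  | bex {f} {Q : (ℕ → X) → X → Prop} : Tm f → D0 E (fun v => Q (tl v) (v 0)) →
      D0 E (fun v => ∃ x, E x (f v) ∧ Q v x)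

variable {E : X → X → Prop}

theorem D0.congr {P Q : (ℕ → X) → Prop} (h : D0 E P) (e : ∀ v, Q v ↔ P v) : D0 E Q := by
  have : Q = P := funext fun v => propext (e v)
  rw [this]; exact h

theorem D0.or {P Q : (ℕ → X) → Prop} (h : D0 E P) (h' : D0 E Q) :
    D0 E (fun v => P v ∨ Q v) :=
  (D0.not (D0.and (D0.not h) (D0.not h'))).congr fun v => by tauto

theorem D0.imp {P Q : (ℕ → X) → Prop} (h : D0 E P) (h' : D0 E Q) :
    D0 E (fun v => P v → Q v) :=
  (D0.not (D0.and h (D0.not h'))).congr fun v => by tauto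

theorem D0.iff {P Q : (ℕ → X) → Prop} (h : D0 E P) (h' : D0 E Q) :
    D0 E (fun v => P v ↔ Q v) :=
  (D0.and (D0.imp h h') (D0.imp h' h)).congr fun v => by tauto

theorem D0.ball {f : (ℕ → X) → X} {Q : (ℕ → X) → X → Prop} (hf : Tm f)
    (h : D0 E (fun v => Q (tl v) (v 0))) :
    D0 E (fun v => ∀ x, E x (f v) → Q v x) :=
  (D0.not (D0.bex (Q := fun v x => ¬ Q v x) hf (D0.not h))).congr fun v => by
    push Not; rfl

theorem D0.subst {P : (ℕ → X) → Prop} (h : D0 E P) :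
    ∀ {τ : ℕ → (ℕ → X) → X}, (∀ i, Tm (τ i)) → D0 E (fun v => P (fun i => τ i v)) := by
  induction h with
  | mem hf hg => intro τ hτ; exact D0.mem (hf.comp hτ) (hg.comp hτ)
  | eq hf hg => intro τ hτ; exact D0.eq (hf.comp hτ) (hg.comp hτ)
  | not _ ih => intro τ hτ; exact D0.not (ih hτ)
  | and _ _ ih ih' => intro τ hτ; exact D0.and (ih hτ) (ih' hτ)
  | bex hf _ ih =>
    intro τ hτ
    exact D0.bex (hf.comp hτ) (ih (liftS_tm hτ))

/-- Renaming of variables in formulas. -/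
def SF.rename : {n m : ℕ} → SF n → (Fin n → Fin m) → SF m
  | _, _, .mem i j, f => .mem (f i) (f j)
  | _, _, .eq i j, f => .eq (f i) (f j)
  | _, _, .not φ, f => .not (φ.rename f)
  | _, _, .and φ ψ, f => .and (φ.rename f) (ψ.rename f)
  | _, _, .or φ ψ, f => .or (φ.rename f) (ψ.rename f)
  | _, _, .bexMem i φ, f =>
    .bexMem (f i) (φ.rename (Fin.snoc (fun j => (f j).castSucc) (Fin.last _)))
  | _, _, .ballMem i φ, f =>
    .ballMem (f i) (φ.rename (Fin.snoc (fun j => (f j).castSucc) (Fin.last _)))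
  | _, _, .bexSub i φ, f =>
    .bexSub (f i) (φ.rename (Fin.snoc (fun j => (f j).castSucc) (Fin.last _)))
  | _, _, .ballSub i φ, f =>
    .ballSub (f i) (φ.rename (Fin.snoc (fun j => (f j).castSucc) (Fin.last _)))
  | _, _, .ex φ, f => .ex (φ.rename (Fin.snoc (fun j => (f j).castSucc) (Fin.last _)))
  | _, _, .all φ, f => .all (φ.rename (Fin.snoc (fun j => (f j).castSucc) (Fin.last _)))

theorem snoc_rename {n m : ℕ} (f : Fin n → Fin m) (v : Fin m → X) (x : X) :
    (fun i => (Fin.snoc v x : Fin (m + 1) → X)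
      ((Fin.snoc (fun j => (f j).castSucc) (Fin.last _) : Fin (n + 1) → Fin (m + 1)) i)) =
    (Fin.snoc (fun i => v (f i)) x : Fin (n + 1) → X) := by
  funext i
  refine Fin.lastCases ?_ (fun j => ?_) i <;> simp

theorem SF.eval_rename : ∀ {n : ℕ} (φ : SF n) {m : ℕ} (f : Fin n → Fin m) (v : Fin m → X),
    (φ.rename f).Eval E v ↔ φ.Eval E (fun i => v (f i))
  | _, .mem i j, _, f, v => by simp [SF.rename, SF.Eval]
  | _, .eq i j, _, f, v => by simp [SF.rename, SF.Eval]
  | _, .not φ, _, f, v => by simp [SF.rename, SF.Eval, eval_rename φ]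
  | _, .and φ ψ, _, f, v => by simp [SF.rename, SF.Eval, eval_rename φ, eval_rename ψ]
  | _, .or φ ψ, _, f, v => by simp [SF.rename, SF.Eval, eval_rename φ, eval_rename ψ]
  | _, .bexMem i φ, _, f, v => by simp [SF.rename, SF.Eval, eval_rename φ, snoc_rename]
  | _, .ballMem i φ, _, f, v => by simp [SF.rename, SF.Eval, eval_rename φ, snoc_rename]
  | _, .bexSub i φ, _, f, v => by simp [SF.rename, SF.Eval, eval_rename φ, snoc_rename]
  | _, .ballSub i φ, _, f, v => by simp [SF.rename, SF.Eval, eval_rename φ, snoc_rename]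
  | _, .ex φ, _, f, v => by simp [SF.rename, SF.Eval, eval_rename φ, snoc_rename]
  | _, .all φ, _, f, v => by simp [SF.rename, SF.Eval, eval_rename φ, snoc_rename]

theorem SF.isDelta0_rename : ∀ {n : ℕ} (φ : SF n) {m : ℕ} (f : Fin n → Fin m),
    φ.IsDelta0 → (φ.rename f).IsDelta0
  | _, .mem i j, _, f, _ => trivial
  | _, .eq i j, _, f, _ => trivial
  | _, .not φ, _, f, h => isDelta0_rename φ f h
  | _, .and φ ψ, _, f, h => ⟨isDelta0_rename φ f h.1, isDelta0_rename ψ f h.2⟩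
  | _, .or φ ψ, _, f, h => ⟨isDelta0_rename φ f h.1, isDelta0_rename ψ f h.2⟩
  | _, .bexMem i φ, _, f, h => isDelta0_rename φ _ h
  | _, .ballMem i φ, _, f, h => isDelta0_rename φ _ h

theorem SF.ren {m N : ℕ} {A : Type*} (φ : SF m) (hφ : φ.IsDelta0) (s : A → Fin m → X)
    (g : A → Fin N → X) (h : ∀ i, ∃ j, ∀ a, s a i = g a j) :
    ∃ φ' : SF N, φ'.IsDelta0 ∧ ∀ a, φ.Eval E (s a) ↔ φ'.Eval E (g a) := by
  choose ρ hρ using h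
  refine ⟨φ.rename ρ, isDelta0_rename φ ρ hφ, fun a => ?_⟩
  rw [eval_rename]
  have : s a = fun i => g a (ρ i) := funext fun i => hρ i a
  rw [this]

theorem D0.toSF {P : (ℕ → X) → Prop} (h : D0 E P) :
    ∃ (m : ℕ) (φ : SF m) (σ : Fin m → (ℕ → X) → X), φ.IsDelta0 ∧ (∀ i, Tm (σ i)) ∧
      ∀ v, P v ↔ φ.Eval E (fun i => σ i v) := by
  induction h with
  | @mem f g hf hg =>
    refine ⟨2, .mem 0 1, ![f, g], trivial, ?_, fun v => Iff.rfl⟩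
    intro i; fin_cases i <;> assumption
  | @eq f g hf hg =>
    refine ⟨2, .eq 0 1, ![f, g], trivial, ?_, fun v => Iff.rfl⟩
    intro i; fin_cases i <;> assumption
  | not _ ih =>
    obtain ⟨m, φ, σ, h1, h2, h3⟩ := ih
    exact ⟨m, .not φ, σ, h1, h2, fun v => not_congr (h3 v)⟩
  | and _ _ ih ih' =>
    obtain ⟨m, φ, σ, h1, h2, h3⟩ := ih
    obtain ⟨m', φ', σ', h1', h2', h3'⟩ := ih'
    refine ⟨m + m', .and (φ.rename (Fin.castAdd m')) (φ'.rename (Fin.natAdd m)),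
      Fin.append σ σ', ⟨SF.isDelta0_rename _ _ h1, SF.isDelta0_rename _ _ h1'⟩, ?_, ?_⟩
    · intro i
      refine Fin.addCases (fun i => ?_) (fun i => ?_) i
      · simpa using h2 i
      · simpa using h2' i
    · intro v
      simp only [SF.Eval, SF.eval_rename, Fin.append_left, Fin.append_right]
      rw [h3, h3']
  | @bex f Q hf _ ih =>
    obtain ⟨m, φ, σ, h1, h2, h3⟩ := ih
    have key : ∀ i, ∃ s, Tm s ∧ ((∀ v x, σ i (econs x v) = s v) ∨
        (∀ v x, σ i (econs x v) = x)) := by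
      intro i
      have := h2 i
      generalize σ i = r at this
      cases this with
      | var j =>
        cases j with
        | zero => exact ⟨_, hf, Or.inr fun _ _ => rfl⟩
        | succ j => exact ⟨_, Tm.var j, Or.inl fun _ _ => rfl⟩
      | const c => exact ⟨_, Tm.const c, Or.inl fun _ _ => rfl⟩
    choose s hs hs' using key
    obtain ⟨φ', h4, h5⟩ := SF.ren (E := E) (A := (ℕ → X) × X) φ h1
      (fun a i => σ i (econs a.2 a.1))
      (fun a => (Fin.snoc (Fin.snoc (fun i => s i a.1) (f a.1) : Fin (m + 1) → X) a.2 :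
        Fin (m + 2) → X)) (by
        intro i
        rcases hs' i with h | h
        · exact ⟨i.castSucc.castSucc, fun a => by simp [h]⟩
        · exact ⟨Fin.last _, fun a => by simp [h]⟩)
    refine ⟨m + 1, .bexMem (Fin.last m) φ', Fin.snoc s f, h4, ?_, ?_⟩
    · intro i
      refine Fin.lastCases ?_ (fun j => ?_) i
      · simpa using hf
      · simpa using hs j
    · intro v
      have e : (fun i => (Fin.snoc s f : Fin (m + 1) → (ℕ → X) → X) i v) =
          (Fin.snoc (fun i => s i v) (f v) : Fin (m + 1) → X) := by
        funext i
        refine Fin.lastCases ?_ (fun j => ?_) i <;> simp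
      rw [e]
      simp only [SF.Eval, Fin.snoc_last]
      refine exists_congr fun x => and_congr Iff.rfl ?_
      exact (h3 (econs x v)).trans (h5 (v, x))

/-- The axioms used. -/
class SetMod (E : X → X → Prop) : Prop where
  most : ModelMOST E
  coll : CollectionScheme E Pi1C

theorem D0.sep [hM : SetMod E] {P : X → Prop} (h : D0 E (fun v => P (v 0))) (w : X) :
    ∃ y, ∀ x, E x y ↔ (E x w ∧ P x) := by
  obtain ⟨m, φ, σ, h1, h2, h3⟩ := h.toSF
  obtain ⟨φ', h4, h5⟩ := SF.ren (E := E) (A := X) φ h1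
      (fun a i => σ i (econs a (fun _ => w)))
      (fun a => (Fin.snoc (fun i => σ i (fun _ => w)) a : Fin (m + 1) → X)) (by
        intro i
        have := h2 i
        generalize hr : σ i = r at this
        cases this with
        | var j =>
          cases j with
          | zero => exact ⟨Fin.last _, fun a => by simp [econs]⟩
          | succ j => exact ⟨i.castSucc, fun a => by simp [econs, hr]⟩
        | const c => exact ⟨i.castSucc, fun a => by simp [hr]⟩)
  obtain ⟨y, hy⟩ := hM.most.1.1.2.2.2.2.2.2.2.1 m φ' h4 (fun i => σ i (fun _ => w)) w
  exact ⟨y, fun x => (hy x).trans (and_congr Iff.rfl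
    ((h5 x).symm.trans (h3 (econs x (fun _ => w))).symm))⟩

theorem D0.sep1 [hM : SetMod E] {P : X → X → Prop} (h : D0 E (fun v => P (v 1) (v 0))) (w : X) :
    ∃ y, ∀ x, E x y ↔ (E x w ∧ ∃ z, P x z) := by
  obtain ⟨m, φ, σ, h1, h2, h3⟩ := h.toSF
  obtain ⟨φ', h4, h5⟩ := SF.ren (E := E) (A := X × X) φ h1
      (fun a i => σ i (econs a.2 (econs a.1 (fun _ => w))))
      (fun a => (Fin.snoc (Fin.snoc (fun i => σ i (fun _ => w)) a.1 : Fin (m + 1) → X) a.2 :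
        Fin (m + 2) → X)) (by
        intro i
        have := h2 i
        generalize hr : σ i = r at this
        cases this with
        | var j =>
          match j with
          | 0 => exact ⟨Fin.last _, fun a => by simp [econs]⟩
          | 1 => exact ⟨(Fin.last _).castSucc, fun a => by simp [econs]⟩
          | j + 2 => exact ⟨i.castSucc.castSucc, fun a => by simp [econs, hr]⟩
        | const c => exact ⟨i.castSucc.castSucc, fun a => by simp [hr]⟩)
  obtain ⟨y, hy⟩ := hM.most.2.1 m (.ex φ') ⟨φ', h4, rfl⟩ (fun i => σ i (fun _ => w)) w
  exact ⟨y, fun x => (hy x).trans (and_congr Iff.rfl (exists_congr fun z =>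
    ((h5 (x, z)).symm.trans (h3 (econs z (econs x (fun _ => w)))).symm)))⟩

theorem D0.coll1 [hM : SetMod E] {P : X → X → X → Prop}
    (h : D0 E (fun v => P (v 2) (v 1) (v 0))) (w : X)
    (hw : ∀ x, E x w → ∃ y, ∀ z, P x y z) :
    ∃ c, ∀ x, E x w → ∃ y, E y c ∧ ∀ z, P x y z := by
  obtain ⟨m, φ, σ, h1, h2, h3⟩ := h.toSF
  obtain ⟨φ', h4, h5⟩ := SF.ren (E := E) (A := X × X × X) φ h1
      (fun a i => σ i (econs a.2.2 (econs a.2.1 (econs a.1 (fun _ => w)))))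
      (fun a => (Fin.snoc (Fin.snoc (Fin.snoc (fun i => σ i (fun _ => w)) a.1 :
        Fin (m + 1) → X) a.2.1 : Fin (m + 2) → X) a.2.2 : Fin (m + 3) → X)) (by
        intro i
        have := h2 i
        generalize hr : σ i = r at this
        cases this with
        | var j =>
          match j with
          | 0 => exact ⟨Fin.last _, fun a => by simp [econs]⟩
          | 1 => exact ⟨(Fin.last _).castSucc, fun a => by simp [econs]⟩
          | 2 => exact ⟨(Fin.last _).castSucc.castSucc, fun a => by simp [econs]⟩
          | j + 3 => exact ⟨i.castSucc.castSucc.castSucc, fun a => by simp [econs, hr]⟩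
        | const c => exact ⟨i.castSucc.castSucc.castSucc, fun a => by simp [hr]⟩)
  have e : ∀ x y, (SF.all φ').Eval E (Fin.snoc (Fin.snoc (fun i => σ i (fun _ => w)) x :
        Fin (m + 1) → X) y : Fin (m + 2) → X) ↔ ∀ z, P x y z := fun x y =>
    forall_congr' fun z =>
      ((h5 (x, y, z)).symm.trans (h3 (econs z (econs y (econs x (fun _ => w))))).symm)
  obtain ⟨c, hc⟩ := hM.coll m (.all φ') ⟨φ', h4, rfl⟩ (fun i => σ i (fun _ => w)) w
    (fun x hx => by
      obtain ⟨y, hy⟩ := hw x hx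
      exact ⟨y, (e x y).2 hy⟩)
  refine ⟨c, fun x hx => ?_⟩
  obtain ⟨y, hy, hy'⟩ := hc x hx
  exact ⟨y, hy, (e x y).1 hy'⟩


/-! ### Classes of predicates -/

structure Cls (E : X → X → Prop) (K : ((ℕ → X) → Prop) → Prop) : Prop where
  d0 : ∀ {P}, D0 E P → K P
  subst : ∀ {P}, K P → ∀ {τ : ℕ → (ℕ → X) → X}, (∀ i, Tm (τ i)) → K (fun v => P (fun i => τ i v))
  and : ∀ {P Q}, K P → K Q → K (fun v => P v ∧ Q v)
  or : ∀ {P Q}, K P → K Q → K (fun v => P v ∨ Q v)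
  bex : ∀ {f} {Q : (ℕ → X) → X → Prop}, Tm f → K (fun v => Q (tl v) (v 0)) →
    K (fun v => ∃ x, E x (f v) ∧ Q v x)
  ball : ∀ {f} {Q : (ℕ → X) → X → Prop}, Tm f → K (fun v => Q (tl v) (v 0)) →
    K (fun v => ∀ x, E x (f v) → Q v x)
  coll : ∀ {Q : X → X → Prop}, K (fun v => Q (v 1) (v 0)) → ∀ w,
    (∀ x, E x w → ∃ y, Q x y) → ∃ c, ∀ x, E x w → ∃ y, E y c ∧ Q x y

theorem Cls.subst' {K : ((ℕ → X) → Prop) → Prop} (hK : Cls E K) {P P' : (ℕ → X) → Prop}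
    (h : K P) {τ : ℕ → (ℕ → X) → X} (hτ : ∀ i, Tm (τ i))
    (e : ∀ v, P' v ↔ P (fun i => τ i v)) : K P' := by
  have := hK.subst h hτ
  rwa [← (funext fun v => propext (e v) : P' = fun v => P (fun i => τ i v))] at this

def Ex (K : ((ℕ → X) → Prop) → Prop) (P : (ℕ → X) → Prop) : Prop :=
  ∃ Q : (ℕ → X) → X → Prop, K (fun v => Q (tl v) (v 0)) ∧ ∀ v, P v ↔ ∃ x, Q v x

theorem Ex.congr {K : ((ℕ → X) → Prop) → Prop} {P P' : (ℕ → X) → Prop} (h : Ex K P)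
    (e : ∀ v, P' v ↔ P v) : Ex K P' := by
  obtain ⟨Q, h1, h2⟩ := h
  exact ⟨Q, h1, fun v => (e v).trans (h2 v)⟩

variable [hM : SetMod E]

theorem ext_ax {a b : X} (h : ∀ z, E z a ↔ E z b) : a = b := hM.most.1.1.1 a b h

theorem upair_ax (E : X → X → Prop) [hM : SetMod E] (x y : X) :
    ∃ a, ∀ z, E z a ↔ (z = x ∨ z = y) := hM.most.1.1.2.2.1 x y
theorem union_ax (E : X → X → Prop) [hM : SetMod E] (a : X) :
    ∃ b, ∀ z, E z b ↔ ∃ y, E y a ∧ E z y := hM.most.1.1.2.2.2.1 a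
theorem diff_ax (E : X → X → Prop) [hM : SetMod E] (a b : X) :
    ∃ c, ∀ z, E z c ↔ (E z a ∧ ¬ E z b) := hM.most.1.1.2.2.2.2.1 a b
theorem tco_ax (E : X → X → Prop) [hM : SetMod E] (a : X) :
    ∃ t, TransSet E t ∧ SubE E a t := hM.most.1.1.2.2.2.2.2.1 a
theorem inf_ax (E : X → X → Prop) [hM : SetMod E] : ∃ a, InductiveSet E a :=
  hM.most.1.1.2.2.2.2.2.2.1
theorem found_ax (E : X → X → Prop) [hM : SetMod E] (z : X) (h : ∃ x, E x z) :
    ∃ y, E y z ∧ ∀ x, E x y → ¬ E x z := hM.most.1.1.2.2.2.2.2.2.2.2 z h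
theorem pow_ax (E : X → X → Prop) [hM : SetMod E] (a : X) :
    ∃ p, ∀ z, E z p ↔ SubE E z a := hM.most.1.2 a

namespace Ex
variable {K : ((ℕ → X) → Prop) → Prop} (hK : Cls E K)
include hK

theorem of {P : (ℕ → X) → Prop} (h : K P) : Ex K P :=
  ⟨fun v _ => P v, hK.subst h (τ := fun i v => v (i + 1)) (fun i => Tm.var _),
    fun v => ⟨fun h => ⟨v 0, h⟩, fun ⟨_, h⟩ => h⟩⟩

theorem ex {Q : (ℕ → X) → X → Prop} (h : Ex K (fun v => Q (tl v) (v 0))) :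
    Ex K (fun v => ∃ x, Q v x) := by
  obtain ⟨R, h1, h2⟩ := h
  refine ⟨fun v z => ∃ x, E x z ∧ ∃ y, E y z ∧ R (econs x v) y, ?_, fun v => ⟨?_, ?_⟩⟩
  · refine hK.bex (Tm.var 0) (hK.bex (Tm.var 1) ?_)
    refine hK.subst' (P := fun v => R (tl v) (v 0)) h1 (τ := fun i => match i with
      | 0 => fun v => v 0
      | 1 => fun v => v 1
      | n + 2 => fun v => v (n + 3)) ?_ ?_
    · intro i
      match i with
      | 0 => exact Tm.var _
      | 1 => exact Tm.var _
      | n + 2 => exact Tm.var _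
    · intro v
      apply iff_of_eq
      congr 1
      funext n
      cases n <;> rfl
  · rintro ⟨x, hx⟩
    obtain ⟨y, hy⟩ := (h2 (econs x v)).1 hx
    obtain ⟨z, hz⟩ := upair_ax E x y
    exact ⟨z, x, (hz x).2 (Or.inl rfl), y, (hz y).2 (Or.inr rfl), hy⟩
  · rintro ⟨z, x, _, y, _, hy⟩
    exact ⟨x, (h2 (econs x v)).2 ⟨y, hy⟩⟩

theorem cls : Cls E (Ex K) where
  d0 h := of hK (hK.d0 h)
  subst := by
    rintro P ⟨Q, h1, h2⟩ τ hτ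
    exact ⟨fun v x => Q (fun i => τ i v) x, hK.subst h1 (liftS_tm hτ), fun v => h2 _⟩
  and := by
    rintro P P' ⟨Q, h1, h2⟩ ⟨Q', h1', h2'⟩
    refine ⟨fun v z => (∃ x, E x z ∧ Q v x) ∧ (∃ x, E x z ∧ Q' v x), ?_, fun v => ⟨?_, ?_⟩⟩
    · have hs : ∀ i : ℕ, Tm ((fun i => match i with
          | 0 => fun v => v 0
          | n + 1 => fun v => v (n + 2) : ℕ → (ℕ → X) → X) i) := fun i => by
        cases i <;> exact Tm.var _
      exact hK.and (hK.bex (Tm.var 0) (hK.subst h1 hs)) (hK.bex (Tm.var 0) (hK.subst h1' hs))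
    · rintro ⟨h, h'⟩
      obtain ⟨x, hx⟩ := (h2 v).1 h
      obtain ⟨y, hy⟩ := (h2' v).1 h'
      obtain ⟨z, hz⟩ := upair_ax E x y
      exact ⟨z, ⟨x, (hz x).2 (Or.inl rfl), hx⟩, ⟨y, (hz y).2 (Or.inr rfl), hy⟩⟩
    · rintro ⟨z, ⟨x, _, hx⟩, ⟨y, _, hy⟩⟩
      exact ⟨(h2 v).2 ⟨x, hx⟩, (h2' v).2 ⟨y, hy⟩⟩
  or := by
    rintro P P' ⟨Q, h1, h2⟩ ⟨Q', h1', h2'⟩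
    refine ⟨fun v z => Q v z ∨ Q' v z, hK.or h1 h1', fun v => ?_⟩
    exact (or_congr (h2 v) (h2' v)).trans exists_or.symm
  bex := by
    rintro f Q hf ⟨R, h1, h2⟩
    refine ⟨fun v y => ∃ x, E x (f v) ∧ R (econs x v) y, ?_, fun v => ⟨?_, ?_⟩⟩
    · refine hK.bex hf.tl (hK.subst' (P := fun v => R (tl v) (v 0)) h1 (τ := fun i => match i with
        | 0 => fun v => v 1
        | 1 => fun v => v 0
        | n + 2 => fun v => v (n + 2)) ?_ ?_)
      · intro i
        match i with
        | 0 => exact Tm.var _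
        | 1 => exact Tm.var _
        | n + 2 => exact Tm.var _
      · intro v
        apply iff_of_eq
        congr 1
        funext n
        cases n <;> rfl
    · rintro ⟨x, hx, hq⟩
      obtain ⟨y, hy⟩ := (h2 (econs x v)).1 hq
      exact ⟨y, x, hx, hy⟩
    · rintro ⟨y, x, hx, hy⟩
      exact ⟨x, hx, (h2 (econs x v)).2 ⟨y, hy⟩⟩
  ball := by
    rintro f Q hf ⟨R, h1, h2⟩
    refine ⟨fun v c => ∀ x, E x (f v) → ∃ y, E y c ∧ R (econs x v) y, ?_, fun v => ⟨?_, ?_⟩⟩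
    · refine hK.ball hf.tl (hK.bex (Tm.var 1) (hK.subst' (P := fun v => R (tl v) (v 0)) h1
        (τ := fun i => match i with
        | 0 => fun v => v 0
        | 1 => fun v => v 1
        | n + 2 => fun v => v (n + 3)) ?_ ?_))
      · intro i
        match i with
        | 0 => exact Tm.var _
        | 1 => exact Tm.var _
        | n + 2 => exact Tm.var _
      · intro v
        apply iff_of_eq
        congr 1
        funext n
        cases n <;> rfl
    · intro h
      refine hK.coll (Q := fun x y => R (econs x v) y) ?_ (f v) ?_
      · refine hK.subst' (P := fun v => R (tl v) (v 0)) h1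
          (τ := fun i => match i with
          | 0 => fun v => v 0
          | 1 => fun v => v 1
          | n + 2 => fun _ => v n) ?_ ?_
        · intro i
          match i with
          | 0 => exact Tm.var _
          | 1 => exact Tm.var _
          | n + 2 => exact Tm.const _
        · intro v
          apply iff_of_eq
          congr 1
          funext n
          cases n <;> rfl
      · intro x hx
        exact (h2 (econs x v)).1 (h x hx)
    · rintro ⟨c, hc⟩ x hx
      obtain ⟨y, _, hy⟩ := hc x hx
      exact (h2 (econs x v)).2 ⟨y, hy⟩
  coll := by
    rintro Q ⟨R, h1, h2⟩ w hw
    have e : ∀ x y, Q x y ↔ ∃ z, R (econs y (econs x (fun _ => w))) z := fun x y => h2 (econs y (econs x (fun _ => w)))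
    obtain ⟨c, hc⟩ := hK.coll (Q := fun x e => ∃ y, E y e ∧ ∃ z, E z e ∧
      R (econs y (econs x (fun _ => w))) z) (by
        refine hK.bex (Tm.var 0) (hK.bex (Tm.var 1)
          (hK.subst' (P := fun v => R (tl v) (v 0)) h1
          (τ := fun i => match i with
          | 0 => fun v => v 0
          | 1 => fun v => v 1
          | 2 => fun v => v 3
          | n + 3 => fun _ => w) ?_ ?_))
        · intro i
          match i with
          | 0 => exact Tm.var _
          | 1 => exact Tm.var _
          | 2 => exact Tm.var _
          | n + 3 => exact Tm.const _
        · intro v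
          apply iff_of_eq
          congr 1
          funext n
          match n with
          | 0 => rfl
          | 1 => rfl
          | n + 2 => rfl) w (by
        intro x hx
        obtain ⟨y, hy⟩ := hw x hx
        obtain ⟨z, hz⟩ := (e x y).1 hy
        obtain ⟨p, hp⟩ := upair_ax E y z
        exact ⟨p, y, (hp y).2 (Or.inl rfl), z, (hp z).2 (Or.inr rfl), hz⟩)
    obtain ⟨d, hd⟩ := union_ax E c
    refine ⟨d, fun x hx => ?_⟩
    obtain ⟨p, hp, y, hy, z, hz, hr⟩ := hc x hx
    exact ⟨y, (hd y).2 ⟨p, hp, hy⟩, (e x y).2 ⟨z, hr⟩⟩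

end Ex

theorem D0.cls : Cls E (D0 E) where
  d0 h := h
  subst h := h.subst
  and := D0.and
  or := D0.or
  bex := D0.bex
  ball := D0.ball
  coll := by
    intro Q h w hw
    obtain ⟨c, hc⟩ := D0.coll1 (P := fun x y _ => Q x y)
      (h.subst (τ := fun i v => v (i + 1)) (fun i => Tm.var _)) w
      (fun x hx => (hw x hx).imp fun y hy _ => hy)
    exact ⟨c, fun x hx => (hc x hx).imp fun y hy => ⟨hy.1, hy.2 y⟩⟩

/-- `Σ₁`-definable predicates (with parameters). -/
def S1 (E : X → X → Prop) : ((ℕ → X) → Prop) → Prop := Ex (D0 E)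
/-- `Π₁`-definable predicates. -/
def P1 (E : X → X → Prop) (P : (ℕ → X) → Prop) : Prop := S1 E (fun v => ¬ P v)
/-- `Σ₂`-definable predicates. -/
def S2 (E : X → X → Prop) : ((ℕ → X) → Prop) → Prop := Ex (P1 E)

theorem S1.cls : Cls E (S1 E) := Ex.cls D0.cls

omit hM in
theorem S1.congr {P P' : (ℕ → X) → Prop} (h : S1 E P)
    (e : ∀ v, P' v ↔ P v) : S1 E P' := Ex.congr h e
omit hM in
theorem S2.congr {P P' : (ℕ → X) → Prop} (h : S2 E P)
    (e : ∀ v, P' v ↔ P v) : S2 E P' := Ex.congr h e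
omit hM in
theorem P1.congr {P P' : (ℕ → X) → Prop} (h : P1 E P)
    (e : ∀ v, P' v ↔ P v) : P1 E P' := S1.congr h fun v => not_congr (e v)

theorem P1.cls : Cls E (P1 E) where
  d0 h := S1.cls.d0 h.not
  subst h := fun hτ => S1.cls.subst h hτ
  and h h' := S1.congr (S1.cls.or h h') fun v => by tauto
  or h h' := S1.congr (S1.cls.and h h') fun v => by tauto
  bex {f Q} hf h := S1.congr (S1.cls.ball (Q := fun v x => ¬ Q v x) hf h) fun v => by
    push Not; rfl
  ball {f Q} hf h := S1.congr (S1.cls.bex (Q := fun v x => ¬ Q v x) hf h) fun v => by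
    push Not; rfl
  coll := by
    rintro Q ⟨R, h1, h2⟩ w hw
    have e : ∀ x y, Q x y ↔ ∀ z, ¬ R (econs y (econs x (fun _ => w))) z := fun x y => by
      have := not_congr (h2 (econs y (econs x (fun _ => w))))
      rw [not_not, not_exists] at this
      exact this
    obtain ⟨c, hc⟩ := D0.coll1 (E := E) (P := fun x y z => ¬ R (econs y (econs x (fun _ => w))) z)
      (by
        refine D0.not (D0.cls.subst' (P := fun v => R (tl v) (v 0)) h1
          (τ := fun i => match i with
          | 0 => fun v => v 0
          | 1 => fun v => v 1
          | 2 => fun v => v 2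
          | n + 3 => fun _ => w) ?_ ?_)
        · intro i
          match i with
          | 0 => exact Tm.var _
          | 1 => exact Tm.var _
          | 2 => exact Tm.var _
          | n + 3 => exact Tm.const _
        · intro v
          apply iff_of_eq
          congr 1
          funext n
          match n with
          | 0 => rfl
          | 1 => rfl
          | n + 2 => rfl) w (fun x hx => (hw x hx).imp fun y hy => (e x y).1 hy)
    exact ⟨c, fun x hx => (hc x hx).imp fun y hy => ⟨hy.1, (e x y).2 hy.2⟩⟩

theorem S2.cls : Cls E (S2 E) := Ex.cls P1.cls
theorem S1.ex {Q : (ℕ → X) → X → Prop} (h : S1 E (fun v => Q (tl v) (v 0))) :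
    S1 E (fun v => ∃ x, Q v x) := Ex.ex D0.cls h
theorem S2.ex {Q : (ℕ → X) → X → Prop} (h : S2 E (fun v => Q (tl v) (v 0))) :
    S2 E (fun v => ∃ x, Q v x) := Ex.ex P1.cls h
theorem S2.ofP1 {P : (ℕ → X) → Prop} (h : P1 E P) : S2 E P := Ex.of P1.cls h
theorem S2.ofS1 {P : (ℕ → X) → Prop} (h : S1 E P) : S2 E P := by
  obtain ⟨Q, h1, h2⟩ := h
  exact ⟨Q, P1.cls.d0 h1, h2⟩
theorem P1.all {Q : (ℕ → X) → X → Prop} (h : P1 E (fun v => Q (tl v) (v 0))) :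
    P1 E (fun v => ∀ x, Q v x) :=
  S1.congr (S1.ex (Q := fun v x => ¬ Q v x) h) fun v => not_forall

theorem S1.sep {P : X → Prop} (h : S1 E (fun v => P (v 0))) (w : X) :
    ∃ y, ∀ x, E x y ↔ (E x w ∧ P x) := by
  obtain ⟨R, h1, h2⟩ := h
  have e : ∀ x, P x ↔ ∃ z, R (econs x (fun _ => w)) z := fun x => h2 (econs x (fun _ => w))
  obtain ⟨y, hy⟩ := D0.sep1 (E := E) (P := fun x z => R (econs x (fun _ => w)) z) (by
        refine (D0.cls.subst' (P := fun v => R (tl v) (v 0)) h1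
          (τ := fun i => match i with
          | 0 => fun v => v 0
          | 1 => fun v => v 1
          | n + 2 => fun _ => w) ?_ ?_)
        · intro i
          match i with
          | 0 => exact Tm.var _
          | 1 => exact Tm.var _
          | n + 2 => exact Tm.const _
        · intro v
          apply iff_of_eq
          congr 1
          funext n
          match n with
          | 0 => rfl
          | n + 1 => rfl) w
  exact ⟨y, fun x => by rw [hy, e]⟩

theorem P1.sep {P : X → Prop} (h : P1 E (fun v => P (v 0))) (w : X) :
    ∃ y, ∀ x, E x y ↔ (E x w ∧ P x) := by
  obtain ⟨y, hy⟩ := S1.sep (P := fun x => ¬ P x) h w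
  obtain ⟨c, hc⟩ := diff_ax E w y
  refine ⟨c, fun x => ?_⟩
  rw [hc, hy]; tauto

/-! substitution of terms -/
namespace Cls
variable {K : ((ℕ → X) → Prop) → Prop} (hK : Cls E K)
include hK
omit hM

theorem of1 {P : X → Prop} (h : K (fun v => P (v 0))) {f : (ℕ → X) → X} (hf : Tm f) :
    K (fun v => P (f v)) := hK.subst h (τ := fun _ => f) (fun _ => hf)
theorem of2 {P : X → X → Prop} (h : K (fun v => P (v 0) (v 1))) {f g : (ℕ → X) → X}
    (hf : Tm f) (hg : Tm g) : K (fun v => P (f v) (g v)) :=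
  hK.subst h (τ := fun i => match i with | 0 => f | _ => g)
    (fun i => by split <;> assumption)
theorem of3 {P : X → X → X → Prop} (h : K (fun v => P (v 0) (v 1) (v 2)))
    {f g k : (ℕ → X) → X}
    (hf : Tm f) (hg : Tm g) (hk : Tm k) : K (fun v => P (f v) (g v) (k v)) :=
  hK.subst h (τ := fun i => match i with | 0 => f | 1 => g | _ => k)
    (fun i => by split <;> assumption)
theorem of4 {P : X → X → X → X → Prop} (h : K (fun v => P (v 0) (v 1) (v 2) (v 3)))
    {f g k l : (ℕ → X) → X}
    (hf : Tm f) (hg : Tm g) (hk : Tm k) (hl : Tm l) : K (fun v => P (f v) (g v) (k v) (l v)) :=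
  hK.subst h (τ := fun i => match i with | 0 => f | 1 => g | 2 => k | _ => l)
    (fun i => by split <;> assumption)
end Cls


/-! ### Basic set operations -/

noncomputable def upr (E : X → X → Prop) [hM : SetMod E] (x y : X) : X :=
  Classical.choose (upair_ax E x y)
theorem mem_upr {x y z : X} : E z (upr E x y) ↔ (z = x ∨ z = y) :=
  Classical.choose_spec (upair_ax E x y) z
noncomputable def pr (E : X → X → Prop) [hM : SetMod E] (x y : X) : X :=
  upr E (upr E x x) (upr E x y)
noncomputable def un (E : X → X → Prop) [hM : SetMod E] (a : X) : X :=
  Classical.choose (union_ax E a)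
theorem mem_un {a z : X} : E z (un E a) ↔ ∃ y, E y a ∧ E z y :=
  Classical.choose_spec (union_ax E a) z
noncomputable def pow (E : X → X → Prop) [hM : SetMod E] (a : X) : X :=
  Classical.choose (pow_ax E a)
theorem mem_pow {a z : X} : E z (pow E a) ↔ SubE E z a :=
  Classical.choose_spec (pow_ax E a) z
noncomputable def bun (E : X → X → Prop) [hM : SetMod E] (a b : X) : X := un E (upr E a b)
theorem mem_bun {a b z : X} : E z (bun E a b) ↔ (E z a ∨ E z b) := by
  simp only [bun, mem_un (E := E), mem_upr (E := E)]
  constructor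
  · rintro ⟨y, rfl | rfl, h⟩
    · exact Or.inl h
    · exact Or.inr h
  · rintro (h | h)
    · exact ⟨a, Or.inl rfl, h⟩
    · exact ⟨b, Or.inr rfl, h⟩
noncomputable def sg (E : X → X → Prop) [hM : SetMod E] (a : X) : X := upr E a a
theorem mem_sg {a z : X} : E z (sg E a) ↔ z = a := by simp only [sg, mem_upr (E := E), or_self]
noncomputable def suc (E : X → X → Prop) [hM : SetMod E] (a : X) : X := bun E a (sg E a)
theorem mem_suc {a z : X} : E z (suc E a) ↔ (E z a ∨ z = a) := by
  simp only [suc, mem_bun (E := E), mem_sg (E := E)]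

theorem upr_inj_left {x y y' : X} (h : upr E x y = upr E x y') : y = y' := by
  have h1 : E y (upr E x y') := h ▸ mem_upr.2 (Or.inr rfl)
  have h2 : E y' (upr E x y) := h ▸ mem_upr.2 (Or.inr rfl)
  rw [mem_upr (E := E)] at h1 h2
  grind

theorem pr_inj {x y x' y' : X} (h : pr E x y = pr E x' y') : x = x' ∧ y = y' := by
  have key : x = x' := by
    have : E (upr E x x) (pr E x' y') := h ▸ mem_upr.2 (Or.inl rfl)
    rcases mem_upr.1 this with h1 | h1
    · have : E x (upr E x' x') := h1 ▸ mem_upr.2 (Or.inl rfl)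
      simpa [mem_upr (E := E)] using this
    · have : E x' (upr E x x) := h1 ▸ mem_upr.2 (Or.inl rfl)
      have := mem_upr.1 this
      grind
  subst key
  exact ⟨rfl, upr_inj_left (upr_inj_left h)⟩

theorem pr_inj_iff {x y x' y' : X} : pr E x y = pr E x' y' ↔ x = x' ∧ y = y' :=
  ⟨pr_inj, fun h => by rw [h.1, h.2]⟩

theorem eq_pr_iff {q x y : X} : q = pr E x y ↔ ∃ s, E s q ∧ ((∀ z, E z s → z = x) ∧ E x s ∧
    ∃ d, E d q ∧ (E x d ∧ E y d ∧ (∀ z, E z d → (z = x ∨ z = y)) ∧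
      ∀ z, E z q → (z = s ∨ z = d))) := by
  constructor
  · rintro rfl
    refine ⟨upr E x x, mem_upr.2 (Or.inl rfl), fun z hz => by simpa [mem_upr (E := E)] using hz,
      mem_upr.2 (Or.inl rfl), upr E x y, mem_upr.2 (Or.inr rfl), mem_upr.2 (Or.inl rfl),
      mem_upr.2 (Or.inr rfl), fun z hz => mem_upr.1 hz, fun z hz => mem_upr.1 hz⟩
  · rintro ⟨s, hs, h1, h2, d, hd, h3, h4, h5, h6⟩
    have es : s = upr E x x := ext_ax (E := E) fun z => by rw [mem_upr (E := E)]; grind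
    have ed : d = upr E x y := ext_ax (E := E) fun z => by rw [mem_upr (E := E)]; grind
    apply ext_ax (E := E)
    intro z
    rw [pr, mem_upr (E := E), ← es, ← ed]
    grind

theorem D0.eqPr {f g k : (ℕ → X) → X} (hf : Tm f) (hg : Tm g) (hk : Tm k) :
    D0 E (fun v => f v = pr E (g v) (k v)) := by
  refine D0.cls.of3 (P := fun a b c => a = pr E b c) (D0.congr ?_ (fun v => eq_pr_iff)) hf hg hk
  repeat (first | exact Tm.var _ | apply D0.mem | apply D0.eq | apply D0.and | apply D0.or | apply D0.bex | apply D0.ball)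

theorem D0.memPr {f g k : (ℕ → X) → X} (hf : Tm f) (hg : Tm g) (hk : Tm k) :
    D0 E (fun v => E (pr E (g v) (k v)) (f v)) := by
  refine D0.cls.of3 (P := fun a b c => E (pr E b c) a) (D0.congr
    (P := fun v => ∃ q, E q (v 0) ∧ q = pr E (v 1) (v 2)) ?_ (fun v => ?_)) hf hg hk
  · exact D0.bex (Tm.var 0) (D0.eqPr (Tm.var 0) (Tm.var 2) (Tm.var 3))
  · exact ⟨fun h => ⟨_, h, rfl⟩, by rintro ⟨q, h, rfl⟩; exact h⟩

theorem irr {x : X} : ¬ E x x := by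
  intro h
  obtain ⟨y, h1, h2⟩ := found_ax E (sg E x) ⟨x, mem_sg.2 rfl⟩
  rw [mem_sg (E := E)] at h1
  subst h1
  exact h2 y h (mem_sg.2 rfl)

theorem asym {x y : X} (h : E x y) (h' : E y x) : False := by
  obtain ⟨z, h1, h2⟩ := found_ax E (upr E x y) ⟨x, mem_upr.2 (Or.inl rfl)⟩
  rw [mem_upr (E := E)] at h1
  rcases h1 with rfl | rfl
  · exact h2 y h' (mem_upr.2 (Or.inr rfl))
  · exact h2 x h (mem_upr.2 (Or.inl rfl))

/-- minimal elements from separation -/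
theorem min_of_sep {P : X → Prop} {w : X} (h : ∃ y, ∀ x, E x y ↔ (E x w ∧ P x))
    (hne : ∃ x, E x w ∧ P x) : ∃ x, E x w ∧ P x ∧ ∀ y, E y x → E y w → ¬ P y := by
  obtain ⟨s, hs⟩ := h
  obtain ⟨x, hx⟩ := hne
  obtain ⟨y, h1, h2⟩ := found_ax E s ⟨x, (hs x).2 hx⟩
  exact ⟨y, ((hs y).1 h1).1, ((hs y).1 h1).2, fun z hz hzw hP => h2 z hz ((hs z).2 ⟨hzw, hP⟩)⟩

theorem D0.min {P : X → Prop} (h : D0 E (fun v => P (v 0))) (w : X)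
    (hne : ∃ x, E x w ∧ P x) : ∃ x, E x w ∧ P x ∧ ∀ y, E y x → E y w → ¬ P y :=
  min_of_sep (h.sep w) hne

/-- induction on a transitive set -/
theorem D0.ind {P : X → Prop} (h : D0 E (fun v => P (v 0))) {w : X} (hw : TransSet E w)
    (step : ∀ x, E x w → (∀ y, E y x → P y) → P x) : ∀ x, E x w → P x := by
  by_contra hc
  push Not at hc
  obtain ⟨x, hx, hP, hm⟩ := D0.min (P := fun x => ¬ P x) h.not w hc
  exact hP (step x hx fun y hy => not_not.1 (hm y hy (hw x hx y hy)))

theorem exists_prod (A B : X) : ∃ c, ∀ q, E q c ↔ ∃ a, E a A ∧ ∃ b, E b B ∧ q = pr E a b := by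
  obtain ⟨c, hc⟩ := D0.sep (E := E) (P := fun q => ∃ a, E a A ∧ ∃ b, E b B ∧ q = pr E a b)
    (by
      repeat (first | exact Tm.var _ | exact Tm.const _ | apply D0.eqPr | apply D0.bex))
    (pow E (pow E (bun E A B)))
  refine ⟨c, fun q => (hc q).trans ⟨fun h => h.2, fun h => ⟨?_, h⟩⟩⟩
  obtain ⟨a, ha, b, hb, rfl⟩ := h
  rw [mem_pow (E := E)]
  intro z hz
  rw [mem_pow (E := E)]
  intro y hy
  rw [mem_bun (E := E)]
  rcases mem_upr.1 hz with rfl | rfl <;> rcases mem_upr.1 hy with rfl | rfl <;> simp [ha, hb]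

noncomputable def prod (E : X → X → Prop) [hM : SetMod E] (A B : X) : X :=
  Classical.choose (exists_prod (E := E) A B)
theorem mem_prod {A B q : X} : E q (prod E A B) ↔ ∃ a, E a A ∧ ∃ b, E b B ∧ q = pr E a b :=
  Classical.choose_spec (exists_prod (E := E) A B) q
theorem pr_mem_prod {A B a b : X} : E (pr E a b) (prod E A B) ↔ E a A ∧ E b B := by
  rw [mem_prod (E := E)]
  constructor
  · rintro ⟨a', ha, b', hb, h⟩
    obtain ⟨rfl, rfl⟩ := pr_inj h
    exact ⟨ha, hb⟩
  · rintro ⟨ha, hb⟩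
    exact ⟨a, ha, b, hb, rfl⟩

/-- relations on sets by separation -/
theorem rel_of {P : X → Prop} {Q : X → X → Prop} {A B : X}
    (h : ∃ y, ∀ x, E x y ↔ (E x (prod E A B) ∧ P x))
    (hPQ : ∀ a b, P (pr E a b) ↔ Q a b) :
    ∃ R, SubE E R (prod E A B) ∧ ∀ a b, E (pr E a b) R ↔ (E a A ∧ E b B ∧ Q a b) := by
  obtain ⟨R, hR⟩ := h
  exact ⟨R, fun z hz => ((hR z).1 hz).1, fun a b => by rw [hR, pr_mem_prod (E := E), hPQ, and_assoc]⟩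

theorem sep_rel {K : ((ℕ → X) → Prop) → Prop} (hK : Cls E K)
    (hsep : ∀ (P : X → Prop) (w : X), K (fun v => P (v 0)) → ∃ y, ∀ x, E x y ↔ (E x w ∧ P x))
    {Q : X → X → Prop} (h : K (fun v => Q (v 0) (v 1))) (A B : X) :
    ∃ R, SubE E R (prod E A B) ∧ ∀ a b, E (pr E a b) R ↔ (E a A ∧ E b B ∧ Q a b) := by
  refine rel_of (P := fun q => ∃ a, E a A ∧ ∃ b, E b B ∧ (q = pr E a b ∧ Q a b)) (Q := fun a b =>
    E a A ∧ E b B ∧ Q a b) (hsep _ _ ?_) ?_ |>.imp fun R hR => ⟨hR.1, fun a b => ?_⟩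
  · refine hK.bex (Tm.const A) (hK.bex (Tm.const B) (hK.and
      (hK.d0 (D0.eqPr (Tm.var 2) (Tm.var 1) (Tm.var 0))) ?_))
    exact hK.of2 (P := Q) h (Tm.var 1) (Tm.var 0)
  · intro a b
    constructor
    · rintro ⟨a', ha, b', hb, h, hq⟩
      obtain ⟨rfl, rfl⟩ := pr_inj h
      exact ⟨ha, hb, hq⟩
    · rintro ⟨ha, hb, hq⟩
      exact ⟨a, ha, b, hb, rfl, hq⟩
  · rw [hR.2]; tauto

theorem D0.rel {Q : X → X → Prop} (h : D0 E (fun v => Q (v 0) (v 1))) (A B : X) :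
    ∃ R, SubE E R (prod E A B) ∧ ∀ a b, E (pr E a b) R ↔ (E a A ∧ E b B ∧ Q a b) :=
  sep_rel D0.cls (fun P w h => h.sep w) h A B
theorem S1.rel {Q : X → X → Prop} (h : S1 E (fun v => Q (v 0) (v 1))) (A B : X) :
    ∃ R, SubE E R (prod E A B) ∧ ∀ a b, E (pr E a b) R ↔ (E a A ∧ E b B ∧ Q a b) :=
  sep_rel S1.cls (fun P w h => S1.sep h w) h A B


/-! ### The sets `H(s)` of sets with transitive closure injecting into `s` -/

def Inj (E : X → X → Prop) [hM : SetMod E] (s T i : X) : Prop :=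
  (∀ x, E x T → ∃ a, E a s ∧ E (pr E x a) i) ∧
  (∀ x, E x T → ∀ x', E x' T → ∀ a, E a s → (E (pr E x a) i → (E (pr E x' a) i → x = x')))

theorem D0.inj {f g k : (ℕ → X) → X} (hf : Tm f) (hg : Tm g) (hk : Tm k) :
    D0 E (fun v => Inj E (f v) (g v) (k v)) := by
  refine D0.cls.of3 (P := fun a b c => Inj E a b c) ?_ hf hg hk
  unfold Inj
  repeat (first | assumption | exact Tm.var _ | exact Tm.const _ | apply D0.pr | apply D0.memPr | apply D0.eqPr | apply D0.mem | apply D0.eq | apply D0.and | apply D0.or | apply D0.iff | apply D0.not | apply D0.bex | apply D0.ball | apply D0.imp)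

theorem D0.trans {f : (ℕ → X) → X} (hf : Tm f) :
    D0 E (fun v => TransSet E (f v)) := by
  refine D0.cls.of1 (P := fun a => TransSet E a) ?_ hf
  unfold TransSet
  repeat (first | assumption | exact Tm.var _ | exact Tm.const _ | apply D0.pr | apply D0.memPr | apply D0.eqPr | apply D0.mem | apply D0.eq | apply D0.and | apply D0.or | apply D0.iff | apply D0.not | apply D0.bex | apply D0.ball | apply D0.imp)

theorem D0.sub {f g : (ℕ → X) → X} (hf : Tm f) (hg : Tm g) :
    D0 E (fun v => SubE E (f v) (g v)) := by
  refine D0.cls.of2 (P := fun a b => SubE E a b) ?_ hf hg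
  unfold SubE
  repeat (first | assumption | exact Tm.var _ | exact Tm.const _ | apply D0.pr | apply D0.memPr | apply D0.eqPr | apply D0.mem | apply D0.eq | apply D0.and | apply D0.or | apply D0.iff | apply D0.not | apply D0.bex | apply D0.ball | apply D0.imp)

def InH (E : X → X → Prop) [hM : SetMod E] (s y : X) : Prop :=
  ∃ T, ∃ i, TransSet E T ∧ E y T ∧ Inj E s T i

theorem S1.inH {f g : (ℕ → X) → X} (hf : Tm f) (hg : Tm g) :
    S1 E (fun v => InH E (f v) (g v)) := by
  refine S1.cls.of2 (P := fun a b => InH E a b) ?_ hf hg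
  refine S1.ex (S1.ex (S1.cls.d0 (D0.and (D0.trans (Tm.var 1)) (D0.and
    (D0.mem (Tm.var 3) (Tm.var 1)) (D0.inj (Tm.var 2) (Tm.var 1) (Tm.var 0))))))

def Code (E : X → X → Prop) [hM : SetMod E] (s d R T i : X) : Prop :=
  TransSet E T ∧ Inj E s T i ∧
  (∀ a, E a s → (E a d ↔ ∃ x, E x T ∧ E (pr E x a) i)) ∧
  (∀ a, E a s → ∀ b, E b s → (E (pr E a b) R ↔ ∃ x, E x T ∧ ∃ y, E y T ∧
    (E (pr E x a) i ∧ E (pr E y b) i ∧ E x y)))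

theorem D0.code (s : X) : D0 E (fun v => Code E s (v 2) (v 1) (v 4) (v 0)) := by
  unfold Code
  refine D0.and (D0.trans (Tm.var _)) (D0.and (D0.inj (Tm.const _) (Tm.var _) (Tm.var _)) ?_)
  repeat (first | assumption | exact Tm.var _ | exact Tm.const _ | apply D0.pr | apply D0.memPr | apply D0.eqPr | apply D0.mem | apply D0.eq | apply D0.and | apply D0.or | apply D0.iff | apply D0.not | apply D0.bex | apply D0.ball | apply D0.imp)

theorem exists_code {s T i : X} (hT : TransSet E T) (hi : Inj E s T i) :
    ∃ d R, SubE E d s ∧ SubE E R (prod E s s) ∧ Code E s d R T i := by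
  obtain ⟨d, hd⟩ := D0.sep (E := E) (P := fun a => ∃ x, E x T ∧ E (pr E x a) i) (by repeat (first | assumption | exact Tm.var _ | exact Tm.const _ | apply D0.pr | apply D0.memPr | apply D0.eqPr | apply D0.mem | apply D0.eq | apply D0.and | apply D0.or | apply D0.iff | apply D0.not | apply D0.bex | apply D0.ball | apply D0.imp)) s
  obtain ⟨R, hR, hR'⟩ := D0.rel (E := E) (Q := fun a b => ∃ x, E x T ∧ ∃ y, E y T ∧
    (E (pr E x a) i ∧ E (pr E y b) i ∧ E x y)) (by repeat (first | assumption | exact Tm.var _ | exact Tm.const _ | apply D0.pr | apply D0.memPr | apply D0.eqPr | apply D0.mem | apply D0.eq | apply D0.and | apply D0.or | apply D0.iff | apply D0.not | apply D0.bex | apply D0.ball | apply D0.imp)) s s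
  refine ⟨d, R, fun z hz => ((hd z).1 hz).1, hR, hT, hi, fun a ha => ?_, fun a ha b hb => ?_⟩
  · rw [hd]; tauto
  · rw [hR']; exact ⟨fun h => h.2.2, fun h => ⟨ha, hb, h⟩⟩

theorem code_eq {s d R T i T' i' : X} (h : Code E s d R T i) (h' : Code E s d R T' i') :
    ∀ x, E x T → ∀ x', E x' T' → ∀ a, E a s → (E (pr E x a) i → (E (pr E x' a) i' → x = x')) := by
  obtain ⟨hT, hi, hd, hR⟩ := h
  obtain ⟨hT', hi', hd', hR'⟩ := h'
  refine D0.ind (E := E) (P := fun x => ∀ x', E x' T' → ∀ a, E a s →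
    (E (pr E x a) i → (E (pr E x' a) i' → x = x'))) (by repeat (first | assumption | exact Tm.var _ | exact Tm.const _ | apply D0.pr | apply D0.memPr | apply D0.eqPr | apply D0.mem | apply D0.eq | apply D0.and | apply D0.or | apply D0.iff | apply D0.not | apply D0.bex | apply D0.ball | apply D0.imp)) hT ?_
  intro x hx ih x' hx' a ha h1 h2
  apply ext_ax (E := E)
  intro z
  constructor
  · intro hz
    obtain ⟨b, hb, hzb⟩ := hi.1 z (hT x hx z hz)
    obtain ⟨z1, hz1, w1, hw1, e1, e2, e3⟩ := (hR' b hb a ha).1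
      ((hR b hb a ha).2 ⟨z, hT x hx z hz, x, hx, hzb, h1, hz⟩)
    have : w1 = x' := hi'.2 _ hw1 _ hx' a ha e2 h2
    subst this
    rw [ih z hz z1 hz1 b hb hzb e1]
    exact e3
  · intro hz
    obtain ⟨b, hb, hzb⟩ := hi'.1 z (hT' x' hx' z hz)
    obtain ⟨z1, hz1, w1, hw1, e1, e2, e3⟩ := (hR b hb a ha).1
      ((hR' b hb a ha).2 ⟨z, hT' x' hx' z hz, x', hx', hzb, h2, hz⟩)
    have : w1 = x := hi.2 _ hw1 _ hx a ha e2 h1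
    subst this
    rw [← ih z1 e3 z (hT' x' hx' z hz) b hb e1 hzb]
    exact e3

theorem code_sub {s d R T i T' i' : X} (h : Code E s d R T i) (h' : Code E s d R T' i') :
    SubE E T T' := by
  intro x hx
  obtain ⟨a, ha, hxa⟩ := h.2.1.1 x hx
  obtain ⟨x', hx', e⟩ := (h'.2.2.1 a ha).1 ((h.2.2.1 a ha).2 ⟨x, hx, hxa⟩)
  rw [code_eq h h' x hx x' hx' a ha hxa e]
  exact hx'

theorem exists_H (s : X) : ∃ h, ∀ y, E y h ↔ InH E s y := by
  let Rz : X → X → Prop := fun q T => ∃ d, ∃ R, ∃ i, q = pr E d R ∧ Code E s d R T i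
  have hRz : S1 E (fun v => Rz (v 1) (v 0)) := by
    refine S1.ex (S1.ex (S1.ex (S1.cls.d0 (D0.and (D0.eqPr (Tm.var 4) (Tm.var 2) (Tm.var 1)) ?_))))
    exact D0.subst (D0.code s) (τ := fun n => match n with
      | 4 => fun v => v 3
      | n => fun v => v n) (fun i => by split <;> exact Tm.var _)
  obtain ⟨Q, hQ⟩ := S1.sep (E := E) (P := fun q => ∃ T, Rz q T) (S1.ex (Q := fun v T => Rz (v 0) T)
    hRz) (prod E (pow E s) (pow E (prod E s s)))
  obtain ⟨c, hc⟩ := S1.cls.coll hRz Q (fun q hq => ((hQ q).1 hq).2)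
  obtain ⟨h, hh⟩ := S1.sep (E := E) (P := fun y => InH E s y)
    (S1.inH (Tm.const _) (Tm.var _)) (un E c)
  refine ⟨h, fun y => (hh y).trans ⟨fun h => h.2, fun h => ⟨?_, h⟩⟩⟩
  obtain ⟨T, i, hT, hy, hi⟩ := h
  obtain ⟨d, R, hd, hR, hcode⟩ := exists_code hT hi
  obtain ⟨T', hT', d', R', i', e, hcode'⟩ := hc (pr E d R) ((hQ _).2 ⟨pr_mem_prod.2
    ⟨mem_pow.2 hd, mem_pow.2 hR⟩, T, d, R, i, rfl, hcode⟩)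
  obtain ⟨rfl, rfl⟩ := pr_inj e
  exact mem_un.2 ⟨T', hT', code_sub hcode hcode' y hy⟩

noncomputable def H (E : X → X → Prop) [hM : SetMod E] (s : X) : X :=
  Classical.choose (exists_H (E := E) s)
theorem mem_H {s y : X} : E y (H E s) ↔ InH E s y :=
  Classical.choose_spec (exists_H (E := E) s) y

theorem InH.mono {s s' y : X} (hs : SubE E s s') (h : InH E s y) : InH E s' y := by
  obtain ⟨T, i, hT, hy, hi⟩ := h
  obtain ⟨j, hj, hj'⟩ := D0.rel (E := E) (Q := fun x a => E (pr E x a) i) (by repeat (first | assumption | exact Tm.var _ | exact Tm.const _ | apply D0.pr | apply D0.memPr | apply D0.eqPr | apply D0.mem | apply D0.eq | apply D0.and | apply D0.or | apply D0.iff | apply D0.not | apply D0.bex | apply D0.ball | apply D0.imp)) T s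
  refine ⟨T, j, hT, hy, fun x hx => ?_, fun x hx x' hx' a ha h1 h2 => ?_⟩
  · obtain ⟨a, ha, h⟩ := hi.1 x hx
    exact ⟨a, hs a ha, (hj' _ _).2 ⟨hx, ha, h⟩⟩
  · rw [hj'] at h1 h2
    exact hi.2 x hx x' hx' a h1.2.1 h1.2.2 h2.2.2

/-! ### Ordinals -/

theorem D0.ord {f : (ℕ → X) → X} (hf : Tm f) :
    D0 E (fun v => IsOrdinal E (f v)) := by
  refine D0.cls.of1 (P := fun a => IsOrdinal E a) ?_ hf
  unfold IsOrdinal TransSet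
  repeat (first | assumption | exact Tm.var _ | exact Tm.const _ | apply D0.pr | apply D0.memPr | apply D0.eqPr | apply D0.mem | apply D0.eq | apply D0.and | apply D0.or | apply D0.iff | apply D0.not | apply D0.bex | apply D0.ball | apply D0.imp)

omit hM in
theorem IsOrdinal.mem {a b : X} (h : IsOrdinal E a) (hb : E b a) : IsOrdinal E b :=
  ⟨h.2 b hb, fun y hy => h.2 y (h.1 b hb y hy)⟩

theorem IsOrdinal.suc {a : X} (h : IsOrdinal E a) : IsOrdinal E (suc E a) := by
  refine ⟨fun y hy z hz => ?_, fun y hy => ?_⟩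
  · rw [mem_suc (E := E)] at hy ⊢
    rcases hy with hy | rfl
    · exact Or.inl (h.1 y hy z hz)
    · exact Or.inl hz
  · rw [mem_suc (E := E)] at hy
    rcases hy with hy | rfl
    · exact h.2 y hy
    · exact h.1

theorem IsOrdinal.tri {a b : X} (ha : IsOrdinal E a) (hb : IsOrdinal E b) :
    E a b ∨ a = b ∨ E b a := by
  have key : ∀ a b, IsOrdinal E a → IsOrdinal E b → ∀ x, E x a → ∀ y, E y b →
      (E x y ∨ x = y ∨ E y x) := by
    intro a b ha hb
    refine D0.ind (E := E) (P := fun x => ∀ y, E y b → (E x y ∨ x = y ∨ E y x)) (by repeat (first | assumption | exact Tm.var _ | exact Tm.const _ | apply D0.pr | apply D0.memPr | apply D0.eqPr | apply D0.mem | apply D0.eq | apply D0.and | apply D0.or | apply D0.iff | apply D0.not | apply D0.bex | apply D0.ball | apply D0.imp)) ha.1 ?_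
    intro x hx ih
    refine D0.ind (E := E) (P := fun y => (E x y ∨ x = y ∨ E y x)) (by repeat (first | assumption | exact Tm.var _ | exact Tm.const _ | apply D0.pr | apply D0.memPr | apply D0.eqPr | apply D0.mem | apply D0.eq | apply D0.and | apply D0.or | apply D0.iff | apply D0.not | apply D0.bex | apply D0.ball | apply D0.imp)) hb.1 ?_
    intro y hy ih2
    by_contra hc
    push Not at hc
    obtain ⟨h1, h2, h3⟩ := hc
    apply h2
    apply ext_ax (E := E)
    intro z
    constructor
    · intro hz
      rcases ih z hz y hy with h | rfl | h
      · exact h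
      · exact absurd hz h3
      · exact absurd (ha.2 x hx z hz y h) h3
    · intro hz
      rcases ih2 z hz with h | rfl | h
      · exact absurd (hb.2 y hy z hz x h) h1
      · exact absurd hz h1
      · exact h
  exact key _ _ ha.suc hb.suc a (mem_suc.2 (Or.inr rfl)) b (mem_suc.2 (Or.inr rfl))

theorem IsOrdinal.un {A : X} (h : ∀ a, E a A → IsOrdinal E a) : IsOrdinal E (un E A) := by
  refine ⟨fun y hy z hz => ?_, fun y hy => ?_⟩
  · rw [mem_un (E := E)] at hy ⊢
    obtain ⟨a, ha, hya⟩ := hy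
    exact ⟨a, ha, (h a ha).1 y hya z hz⟩
  · rw [mem_un (E := E)] at hy
    obtain ⟨a, ha, hya⟩ := hy
    exact (h a ha).2 y hya


/-! ### Well-ordering -/

theorem exists_choice (t : X) : ∃ c, ∀ A, SubE E A t → (∃ a, E a A) →
    ∃! a, E a A ∧ E (pr E A a) c := by
  obtain ⟨S, hS⟩ := D0.sep (E := E) (P := fun z => ∃ A, E A (pow E t) ∧ ((∃ a, E a A ∧ a = a) ∧
      (∀ q, E q z → ∃ a, E a A ∧ q = pr E A a) ∧ (∀ a, E a A → E (pr E A a) z)))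
    (by repeat (first | assumption | exact Tm.var _ | exact Tm.const _ | apply D0.pr | apply D0.memPr | apply D0.eqPr | apply D0.mem | apply D0.eq | apply D0.and | apply D0.or | apply D0.iff | apply D0.not | apply D0.bex | apply D0.ball | apply D0.imp)) (pow E (prod E (pow E t) t))
  obtain ⟨c, hc⟩ := hM.most.2.2 S (by
      intro z hz
      obtain ⟨_, A, hA, ⟨a, ha, _⟩, h1, h2⟩ := (hS z).1 hz
      exact ⟨_, h2 a ha⟩) (by
      intro x y hx hy hne z hzx hzy
      apply hne
      obtain ⟨_, A, hA, _, h1, h2⟩ := (hS x).1 hx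
      obtain ⟨_, A', hA', _, h1', h2'⟩ := (hS y).1 hy
      obtain ⟨a, ha, e⟩ := h1 z hzx
      obtain ⟨a', ha', e'⟩ := h1' z hzy
      obtain ⟨rfl, rfl⟩ := pr_inj (e.symm.trans e')
      apply ext_ax (E := E)
      intro q
      constructor
      · intro hq
        obtain ⟨b, hb, rfl⟩ := h1 q hq
        exact h2' b hb
      · intro hq
        obtain ⟨b, hb, rfl⟩ := h1' q hq
        exact h2 b hb)
  refine ⟨c, fun A hA hne => ?_⟩
  have hz : E (prod E (sg E A) A) S := by
    rw [hS]
    refine ⟨mem_pow.2 fun q hq => ?_, A, mem_pow.2 hA, hne.imp fun a ha => ⟨ha, rfl⟩,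
      fun q hq => ?_, fun a ha => pr_mem_prod.2 ⟨mem_sg.2 rfl, ha⟩⟩
    · obtain ⟨b, hb, a, ha, rfl⟩ := mem_prod.1 hq
      rw [mem_sg (E := E)] at hb
      subst hb
      exact pr_mem_prod.2 ⟨mem_pow.2 hA, hA a ha⟩
    · obtain ⟨b, hb, a, ha, rfl⟩ := mem_prod.1 hq
      rw [mem_sg (E := E)] at hb
      subst hb
      exact ⟨a, ha, rfl⟩
  obtain ⟨q, ⟨hq, hq'⟩, hu⟩ := hc _ hz
  obtain ⟨b, hb, a, ha, rfl⟩ := mem_prod.1 hq'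
  rw [mem_sg (E := E)] at hb
  subst hb
  refine ⟨a, ⟨ha, hq⟩, fun a' ⟨ha', hq'⟩ => ?_⟩
  exact (pr_inj (hu _ ⟨hq', pr_mem_prod.2 ⟨mem_sg.2 rfl, ha'⟩⟩)).2

def Att (E : X → X → Prop) [hM : SetMod E] (t p c F α : X) : Prop :=
  IsOrdinal E α ∧ (∀ q, E q F → ∃ β, E β α ∧ ∃ x, E x t ∧ q = pr E β x) ∧
  (∀ β, E β α → ∃ x, E x t ∧ E (pr E β x) F) ∧
  ∀ β, E β α → ∀ x, E x t → (E (pr E β x) F → ∃ A, E A p ∧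
    ((∀ z, E z t → (E z A ↔ ¬ ∃ γ, E γ β ∧ E (pr E γ z) F)) ∧ E x A ∧ E (pr E A x) c))

theorem D0.att (t p c : X) {f g : (ℕ → X) → X} (hf : Tm f) (hg : Tm g) :
    D0 E (fun v => Att E t p c (f v) (g v)) := by
  refine D0.cls.of2 (P := fun a b => Att E t p c a b) ?_ hf hg
  unfold Att
  refine D0.and (D0.ord (Tm.var _)) ?_
  repeat (first | assumption | exact Tm.var _ | exact Tm.const _ | apply D0.pr | apply D0.memPr | apply D0.eqPr | apply D0.mem | apply D0.eq | apply D0.and | apply D0.or | apply D0.iff | apply D0.not | apply D0.bex | apply D0.ball | apply D0.imp)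

theorem Att.mem {t p c F α β x : X} (h : Att E t p c F α) (hq : E (pr E β x) F) :
    E β α ∧ E x t := by
  obtain ⟨β', hb, x', hx, e⟩ := h.2.1 _ hq
  obtain ⟨rfl, rfl⟩ := pr_inj e
  exact ⟨hb, hx⟩

section
variable {t c : X} (hc : ∀ A, SubE E A t → (∃ a, E a A) → ∃! a, E a A ∧ E (pr E A a) c)
include hc

theorem Att.agree {F α F' α' : X} (h : Att E t (pow E t) c F α) (h' : Att E t (pow E t) c F' α') :
    ∀ β, E β α → (E β α' → ∀ x, E x t → ∀ x', E x' t →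
      (E (pr E β x) F → (E (pr E β x') F' → x = x'))) := by
  refine D0.ind (E := E) (P := fun β => (E β α' → ∀ x, E x t → ∀ x', E x' t →
      (E (pr E β x) F → (E (pr E β x') F' → x = x')))) (by repeat (first | assumption | exact Tm.var _ | exact Tm.const _ | apply D0.pr | apply D0.memPr | apply D0.eqPr | apply D0.mem | apply D0.eq | apply D0.and | apply D0.or | apply D0.iff | apply D0.not | apply D0.bex | apply D0.ball | apply D0.imp)) h.1.1 ?_
  intro β hβ ih hβ' x hx x' hx' hF hF'
  obtain ⟨A, hA, h1, h2, h3⟩ := h.2.2.2 β hβ x hx hF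
  obtain ⟨A', hA', h1', h2', h3'⟩ := h'.2.2.2 β hβ' x' hx' hF'
  rw [mem_pow (E := E)] at hA hA'
  have : A = A' := by
    apply ext_ax (E := E)
    intro z
    by_cases hz : E z t
    · rw [h1 z hz, h1' z hz]
      refine not_congr (exists_congr fun γ => and_congr_right fun hγ => ?_)
      constructor
      · intro hq
        obtain ⟨z', hz', hq'⟩ := h'.2.2.1 γ (h'.1.1 β hβ' γ hγ)
        rwa [ih γ hγ (h'.1.1 β hβ' γ hγ) z hz z' hz' hq hq']
      · intro hq
        obtain ⟨z', hz', hq'⟩ := h.2.2.1 γ (h.1.1 β hβ γ hγ)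
        rwa [← ih γ hγ (h'.1.1 β hβ' γ hγ) z' hz' z hz hq' hq]
    · exact ⟨fun h => absurd (hA z h) hz, fun h => absurd (hA' z h) hz⟩
  subst this
  exact (hc A hA ⟨x, h2⟩).unique ⟨h2, h3⟩ ⟨h2', h3'⟩

theorem Att.inj {F α : X} (h : Att E t (pow E t) c F α) : Inj E t α F := by
  refine ⟨h.2.2.1, ?_⟩
  have key : ∀ β, E β α → ∀ β', E β' α → ∀ a, E a t → E (pr E β a) F → E (pr E β' a) F →
      ¬ E β β' := by
    intro β hβ β' hβ' a ha h1 h2 h3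
    obtain ⟨A, hA, e1, e2, e3⟩ := h.2.2.2 β' hβ' a ha h2
    exact (e1 a ha).1 e2 ⟨β, h3, h1⟩
  intro β hβ β' hβ' a ha h1 h2
  rcases (h.1.mem hβ).tri (h.1.mem hβ') with h3 | h3 | h3
  · exact absurd h3 (key _ hβ _ hβ' a ha h1 h2)
  · exact h3
  · exact absurd h3 (key _ hβ' _ hβ a ha h2 h1)

theorem Att.bd {F α : X} (h : Att E t (pow E t) c F α) :
    E F (pow E (prod E (H E t) t)) ∧ E α (pow E (H E t)) := by
  have : SubE E α (H E t) := fun β hβ => mem_H.2 ⟨α, F, h.1.1, hβ, Att.inj hc h⟩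
  refine ⟨mem_pow.2 fun q hq => ?_, mem_pow.2 this⟩
  obtain ⟨β', hb, x', hx, rfl⟩ := h.2.1 _ hq
  exact pr_mem_prod.2 ⟨this _ hb, hx⟩

theorem exists_att : ∃ F α, Att E t (pow E t) c F α ∧ ∀ F' α' β, Att E t (pow E t) c F' α' →
    E β α' → E β α := by
  obtain ⟨F, hF⟩ := D0.sep (E := E) (P := fun q => ∃ F, E F (pow E (prod E (H E t) t)) ∧
    ∃ α, E α (pow E (H E t)) ∧ (Att E t (pow E t) c F α ∧ E q F))
    (D0.bex (Tm.const _) (D0.bex (Tm.const _) (D0.and (D0.att _ _ _ (Tm.var _) (Tm.var _))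
      (D0.mem (Tm.var _) (Tm.var _))))) (prod E (H E t) t)
  obtain ⟨α, hα⟩ := D0.sep (E := E) (P := fun β => ∃ F, E F (pow E (prod E (H E t) t)) ∧
    ∃ α, E α (pow E (H E t)) ∧ (Att E t (pow E t) c F α ∧ E β α))
    (D0.bex (Tm.const _) (D0.bex (Tm.const _) (D0.and (D0.att _ _ _ (Tm.var _) (Tm.var _))
      (D0.mem (Tm.var _) (Tm.var _))))) (H E t)
  have hF' : ∀ q, E q F ↔ ∃ F' α', Att E t (pow E t) c F' α' ∧ E q F' := by
    intro q
    rw [hF]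
    constructor
    · rintro ⟨_, F', _, α', _, h, hq⟩
      exact ⟨F', α', h, hq⟩
    · rintro ⟨F', α', h, hq⟩
      exact ⟨mem_pow.1 (Att.bd hc h).1 _ hq, F', (Att.bd hc h).1, α', (Att.bd hc h).2, h, hq⟩
  have hα' : ∀ q, E q α ↔ ∃ F' α', Att E t (pow E t) c F' α' ∧ E q α' := by
    intro q
    rw [hα]
    constructor
    · rintro ⟨_, F', _, α', _, h, hq⟩
      exact ⟨F', α', h, hq⟩
    · rintro ⟨F', α', h, hq⟩
      exact ⟨mem_pow.1 (Att.bd hc h).2 _ hq, F', (Att.bd hc h).1, α', (Att.bd hc h).2, h, hq⟩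
  refine ⟨F, α, ⟨⟨?_, ?_⟩, ?_, ?_, ?_⟩, fun F' α' β h h' => (hα' β).2 ⟨F', α', h, h'⟩⟩
  · intro y hy z hz
    obtain ⟨F', α', h, hq⟩ := (hα' y).1 hy
    exact (hα' z).2 ⟨F', α', h, h.1.1 y hq z hz⟩
  · intro y hy
    obtain ⟨F', α', h, hq⟩ := (hα' y).1 hy
    exact h.1.2 y hq
  · intro q hq
    obtain ⟨F', α', h, hq⟩ := (hF' q).1 hq
    obtain ⟨β, hβ, x, hx, e⟩ := h.2.1 q hq
    exact ⟨β, (hα' β).2 ⟨F', α', h, hβ⟩, x, hx, e⟩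
  · intro β hβ
    obtain ⟨F', α', h, hq⟩ := (hα' β).1 hβ
    obtain ⟨x, hx, e⟩ := h.2.2.1 β hq
    exact ⟨x, hx, (hF' _).2 ⟨F', α', h, e⟩⟩
  · intro β hβ x hx hq
    obtain ⟨F', α', h, hq⟩ := (hF' _).1 hq
    obtain ⟨A, hA, h1, h2⟩ := h.2.2.2 β (h.mem hq).1 x hx hq
    refine ⟨A, hA, fun z hz => ?_, h2⟩
    rw [h1 z hz]
    refine not_congr (exists_congr fun γ => and_congr_right fun hγ => ?_)
    constructor
    · intro hg
      exact (hF' _).2 ⟨F', α', h, hg⟩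
    · intro hg
      obtain ⟨F2, α2, h2, hq2⟩ := (hF' _).1 hg
      obtain ⟨z0, hz0, hq0⟩ := h.2.2.1 γ (h.1.1 β (h.mem hq).1 γ hγ)
      rwa [← Att.agree hc h h2 γ (h.mem hq0).1 (h2.mem hq2).1 z0 hz0 z hz hq0 hq2]

theorem inj_ord' : ∃ α j, IsOrdinal E α ∧ Inj E α t j := by
  obtain ⟨F, α, h, hmax⟩ := exists_att hc
  by_cases hcov : ∀ z, E z t → ∃ β, E β α ∧ E (pr E β z) F
  · obtain ⟨j, hj, hj'⟩ := D0.rel (E := E) (Q := fun a b => E (pr E b a) F) (by repeat (first | assumption | exact Tm.var _ | exact Tm.const _ | apply D0.pr | apply D0.memPr | apply D0.eqPr | apply D0.mem | apply D0.eq | apply D0.and | apply D0.or | apply D0.iff | apply D0.not | apply D0.bex | apply D0.ball | apply D0.imp)) t α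
    refine ⟨α, j, h.1, fun x hx => ?_, fun x hx x' hx' a ha h1 h2 => ?_⟩
    · obtain ⟨β, hβ, e⟩ := hcov x hx
      exact ⟨β, hβ, (hj' _ _).2 ⟨hx, hβ, e⟩⟩
    · rw [hj'] at h1 h2
      exact Att.agree hc h h a ha ha x hx x' hx' h1.2.2 h2.2.2
  · exfalso
    push Not at hcov
    obtain ⟨z0, hz0, hz0'⟩ := hcov
    obtain ⟨A, hA⟩ := D0.sep (E := E) (P := fun z => ¬ ∃ γ, E γ α ∧ E (pr E γ z) F) (by repeat (first | assumption | exact Tm.var _ | exact Tm.const _ | apply D0.pr | apply D0.memPr | apply D0.eqPr | apply D0.mem | apply D0.eq | apply D0.and | apply D0.or | apply D0.iff | apply D0.not | apply D0.bex | apply D0.ball | apply D0.imp)) t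
    have hAt : SubE E A t := fun z hz => ((hA z).1 hz).1
    obtain ⟨a, ⟨ha, hac⟩, _⟩ := hc A hAt ⟨z0, (hA z0).2 ⟨hz0, by push Not; exact hz0'⟩⟩
    have hbF : ∀ β x, E (pr E β x) (bun E F (sg E (pr E α a))) ↔
        (E (pr E β x) F ∨ (β = α ∧ x = a)) := by
      intro β x
      rw [mem_bun (E := E), mem_sg (E := E), pr_inj_iff (E := E)]
    have hlow : ∀ γ z, γ ≠ α →
        (E (pr E γ z) (bun E F (sg E (pr E α a))) ↔ E (pr E γ z) F) := by
      intro γ z hγ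
      rw [hbF]; tauto
    have hAtt : Att E t (pow E t) c (bun E F (sg E (pr E α a))) (suc E α) := by
      refine ⟨h.1.suc, ?_, ?_, ?_⟩
      · intro q hq
        rw [mem_bun (E := E), mem_sg (E := E)] at hq
        rcases hq with hq | rfl
        · obtain ⟨β, hβ, x, hx, e⟩ := h.2.1 q hq
          exact ⟨β, mem_suc.2 (Or.inl hβ), x, hx, e⟩
        · exact ⟨α, mem_suc.2 (Or.inr rfl), a, hAt a ha, rfl⟩
      · intro β hβ
        rw [mem_suc (E := E)] at hβ
        rcases hβ with hβ | rfl
        · obtain ⟨x, hx, e⟩ := h.2.2.1 β hβ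
          exact ⟨x, hx, (hbF _ _).2 (Or.inl e)⟩
        · exact ⟨a, hAt a ha, (hbF _ _).2 (Or.inr ⟨rfl, rfl⟩)⟩
      · intro β _ x hx hq
        rcases (hbF _ _).1 hq with hq1 | ⟨rfl, rfl⟩
        · obtain ⟨B, hB, h1, h2⟩ := h.2.2.2 β (h.mem hq1).1 x hx hq1
          refine ⟨B, hB, fun z hz => ?_, h2⟩
          rw [h1 z hz]
          refine not_congr (exists_congr fun γ => and_congr_right fun hγ => ?_)
          rw [hlow]
          rintro rfl
          exact asym hγ (h.mem hq1).1
        · refine ⟨A, mem_pow.2 hAt, fun z hz => ?_, ha, hac⟩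
          rw [hA]
          simp only [hz, true_and]
          refine not_congr (exists_congr fun γ => and_congr_right fun hγ => ?_)
          rw [hlow]
          rintro rfl
          exact irr hγ
    exact irr (hmax _ _ α hAtt (mem_suc.2 (Or.inr rfl)))

end

theorem inj_ord (t : X) : ∃ α j, IsOrdinal E α ∧ Inj E α t j := by
  obtain ⟨c, hc⟩ := exists_choice (E := E) t
  exact inj_ord' hc

/-- every set is contained in some `H(α)` -/
theorem sub_H (B : X) : ∃ α, IsOrdinal E α ∧ SubE E B (H E α) := by
  obtain ⟨t, ht, hB⟩ := tco_ax E B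
  obtain ⟨α, j, h1, h2⟩ := inj_ord (E := E) t
  exact ⟨α, h1, fun y hy => mem_H.2 ⟨t, j, ht, hB y hy, h2⟩⟩


/-! ### `Δ₀^𝒫` formulas are `Δ₂` -/

theorem S2.allSub {f : (ℕ → X) → X} {Q : (ℕ → X) → X → Prop} (hf : Tm f)
    (h : S2 E (fun v => Q (tl v) (v 0))) : S2 E (fun v => ∀ x, SubE E x (f v) → Q v x) := by
  have h1 : S2 E (fun v => ∃ q, (∀ z, SubE E z (f v) → E z q) ∧
      ∀ x, E x q → (¬ SubE E x (f v) ∨ Q v x)) := by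
    refine S2.ex (S2.cls.and (S2.ofP1 (P1.all (P1.cls.d0 (D0.imp ?_ ?_))))
      (S2.cls.ball (Tm.var 0) (S2.cls.or (S2.cls.d0 (D0.not ?_)) ?_)))
    · exact D0.sub (Tm.var 0) hf.tl.tl
    · exact D0.mem (Tm.var 0) (Tm.var 1)
    · exact D0.sub (Tm.var 0) hf.tl.tl
    · refine S2.cls.subst' h (τ := fun i => match i with
        | 0 => fun v => v 0
        | n + 1 => fun v => v (n + 2)) ?_ (fun v => Iff.rfl)
      intro i
      cases i <;> exact Tm.var _
  refine h1.congr fun v => ⟨fun h => ⟨pow E (f v), fun z hz => mem_pow.2 hz, fun x hx =>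
    Or.inr (h x (mem_pow.1 hx))⟩, ?_⟩
  rintro ⟨q, h1, h2⟩ x hx
  rcases h2 x (h1 x hx) with h | h
  · exact absurd hx h
  · exact h

theorem S2.exSub {f : (ℕ → X) → X} {Q : (ℕ → X) → X → Prop} (hf : Tm f)
    (h : S2 E (fun v => Q (tl v) (v 0))) : S2 E (fun v => ∃ x, SubE E x (f v) ∧ Q v x) :=
  S2.ex (S2.cls.and (S2.cls.d0 (D0.sub (Tm.var 0) hf.tl)) h)

theorem snoc_app {n : ℕ} (σ : Fin n → (ℕ → X) → X) (v : ℕ → X) :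
    (fun i => (Fin.snoc (fun i v => σ i (tl v)) (fun v => v 0) : Fin (n + 1) → (ℕ → X) → X) i v) =
    (Fin.snoc (fun i => σ i (tl v)) (v 0) : Fin (n + 1) → X) := by
  funext i
  refine Fin.lastCases ?_ (fun j => ?_) i <;> simp

theorem snoc_app_tm {n : ℕ} (σ : Fin n → (ℕ → X) → X) (hσ : ∀ i, Tm (σ i)) :
    ∀ i, Tm ((Fin.snoc (fun i v => σ i (tl v)) (fun v => v 0) : Fin (n + 1) → (ℕ → X) → X) i) := by
  intro i
  refine Fin.lastCases ?_ (fun j => ?_) i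
  · simpa using Tm.var 0
  · simpa using (hσ j).tl

theorem delta0P_S2 : ∀ {n : ℕ} (φ : SF n), φ.IsDelta0P → ∀ σ : Fin n → (ℕ → X) → X,
    (∀ i, Tm (σ i)) → S2 E (fun v => φ.Eval E (fun i => σ i v)) ∧
      S2 E (fun v => ¬ φ.Eval E (fun i => σ i v))
  | _, .mem i j, _, σ, hσ =>
    ⟨S2.cls.d0 (D0.mem (hσ i) (hσ j)), S2.cls.d0 (D0.not (D0.mem (hσ i) (hσ j)))⟩
  | _, .eq i j, _, σ, hσ =>
    ⟨S2.cls.d0 (D0.eq (hσ i) (hσ j)), S2.cls.d0 (D0.not (D0.eq (hσ i) (hσ j)))⟩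
  | _, .not φ, h, σ, hσ =>
    ⟨(delta0P_S2 φ h σ hσ).2, (delta0P_S2 φ h σ hσ).1.congr fun v => not_not⟩
  | _, .and φ ψ, h, σ, hσ =>
    ⟨S2.cls.and (delta0P_S2 φ h.1 σ hσ).1 (delta0P_S2 ψ h.2 σ hσ).1,
      (S2.cls.or (delta0P_S2 φ h.1 σ hσ).2 (delta0P_S2 ψ h.2 σ hσ).2).congr
        fun v => not_and_or⟩
  | _, .or φ ψ, h, σ, hσ =>
    ⟨S2.cls.or (delta0P_S2 φ h.1 σ hσ).1 (delta0P_S2 ψ h.2 σ hσ).1,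
      (S2.cls.and (delta0P_S2 φ h.1 σ hσ).2 (delta0P_S2 ψ h.2 σ hσ).2).congr
        fun v => not_or⟩
  | _, .bexMem i φ, h, σ, hσ => by
    have ih := delta0P_S2 φ h _ (snoc_app_tm σ hσ)
    simp only [snoc_app] at ih
    refine ⟨S2.cls.bex (Q := fun v x => φ.Eval E (Fin.snoc (fun i => σ i v) x)) (hσ i) ih.1,
      (S2.cls.ball (Q := fun v x => ¬ φ.Eval E (Fin.snoc (fun i => σ i v) x)) (hσ i) ih.2).congr
      fun v => ?_⟩
    simp only [SF.Eval]; push Not; rfl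
  | _, .ballMem i φ, h, σ, hσ => by
    have ih := delta0P_S2 φ h _ (snoc_app_tm σ hσ)
    simp only [snoc_app] at ih
    refine ⟨S2.cls.ball (Q := fun v x => φ.Eval E (Fin.snoc (fun i => σ i v) x)) (hσ i) ih.1,
      (S2.cls.bex (Q := fun v x => ¬ φ.Eval E (Fin.snoc (fun i => σ i v) x)) (hσ i) ih.2).congr
      fun v => ?_⟩
    simp only [SF.Eval]; push Not; rfl
  | _, .bexSub i φ, h, σ, hσ => by
    have ih := delta0P_S2 φ h _ (snoc_app_tm σ hσ)
    simp only [snoc_app] at ih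
    refine ⟨S2.exSub (Q := fun v x => φ.Eval E (Fin.snoc (fun i => σ i v) x)) (hσ i) ih.1,
      (S2.allSub (Q := fun v x => ¬ φ.Eval E (Fin.snoc (fun i => σ i v) x)) (hσ i) ih.2).congr
      fun v => ?_⟩
    simp only [SF.Eval]; push Not; rfl
  | _, .ballSub i φ, h, σ, hσ => by
    have ih := delta0P_S2 φ h _ (snoc_app_tm σ hσ)
    simp only [snoc_app] at ih
    refine ⟨S2.allSub (Q := fun v x => φ.Eval E (Fin.snoc (fun i => σ i v) x)) (hσ i) ih.1,
      (S2.exSub (Q := fun v x => ¬ φ.Eval E (Fin.snoc (fun i => σ i v) x)) (hσ i) ih.2).congr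
      fun v => ?_⟩
    simp only [SF.Eval]; push Not; rfl

theorem S2.matrix1 {C : X → Prop} (h : S2 E (fun v => C (v 0))) :
    ∃ ψ : X → X → Prop, P1 E (fun v => ψ (v 0) (v 1)) ∧ ∀ x, C x ↔ ∃ y, ψ x y := by
  obtain ⟨Q, h1, h2⟩ := h
  refine ⟨fun x y => Q (fun _ => x) y, ?_, fun x => h2 (fun _ => x)⟩
  exact P1.cls.subst' h1 (τ := fun i => match i with
    | 0 => fun v => v 1
    | _ + 1 => fun v => v 0) (fun i => by cases i <;> exact Tm.var _) (fun v => Iff.rfl)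

theorem S2.matrix2 {C : X → X → Prop} (h : S2 E (fun v => C (v 0) (v 1))) :
    ∃ ψ : X → X → X → Prop, P1 E (fun v => ψ (v 0) (v 1) (v 2)) ∧
      ∀ x y, C x y ↔ ∃ z, ψ x y z := by
  obtain ⟨Q, h1, h2⟩ := h
  refine ⟨fun x y z => Q (econs x (fun _ => y)) z, ?_, fun x y => h2 (econs x (fun _ => y))⟩
  refine P1.cls.subst' h1 (τ := fun i => match i with
    | 0 => fun v => v 2
    | 1 => fun v => v 0
    | _ + 2 => fun v => v 1) ?_ ?_
  · intro i
    match i with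
    | 0 => exact Tm.var _
    | 1 => exact Tm.var _
    | n + 2 => exact Tm.var _
  · intro v
    apply iff_of_eq
    show Q _ _ = Q _ _
    congr 1
    funext n
    cases n <;> rfl

/-! ### The successor operation -/

def IsH (E : X → X → Prop) [hM : SetMod E] (α h : X) : Prop :=
  (∀ y, E y h → InH E α y) ∧ ∀ y, InH E α y → E y h

theorem isH_iff {α h : X} : IsH E α h ↔ h = H E α := by
  constructor
  · intro hh
    exact ext_ax (E := E) fun y => by rw [mem_H (E := E)]; exact ⟨hh.1 y, hh.2 y⟩
  · rintro rfl
    exact ⟨fun y hy => mem_H.1 hy, fun y hy => mem_H.2 hy⟩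

theorem S2.isH {f g : (ℕ → X) → X} (hf : Tm f) (hg : Tm g) :
    S2 E (fun v => IsH E (f v) (g v)) := by
  refine S2.cls.of2 (P := fun a b => IsH E a b) ?_ hf hg
  refine S2.cls.and (S2.cls.ball (Tm.var 1) (S2.ofS1 (S1.inH (Tm.var 1) (Tm.var 0))))
    (S2.ofP1 (P1.all ?_))
  refine (P1.cls.or (P := fun v => ¬ InH E (v 1) (v 0)) (Q := fun v => E (v 0) (v 2)) ?_
    (P1.cls.d0 (D0.mem (Tm.var _) (Tm.var _)))).congr fun v => imp_iff_not_or
  exact S1.congr (S1.inH (Tm.var 1) (Tm.var 0)) fun v => not_not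

def Good (E : X → X → Prop) (ψ : X → X → Prop) (d h : X) : Prop :=
  ∀ x, E x d → ∃ x', E x' x ∧ ∃ y, E y h ∧ ψ x' y
def NGood (E : X → X → Prop) (ψ : X → X → Prop) (d h : X) : Prop :=
  ∃ x, E x d ∧ ∀ x', E x' x → ∀ y, E y h → ¬ ψ x' y
omit hM in
theorem ngood_iff {ψ : X → X → Prop} {d h : X} : NGood E ψ d h ↔ ¬ Good E ψ d h := by
  unfold NGood Good; push Not; rfl

def Next (E : X → X → Prop) [hM : SetMod E] (ψ : X → X → Prop) (t d d' : X) : Prop :=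
  ∃ α, ∃ h, IsOrdinal E α ∧ IsH E α h ∧ (∀ x, E x d' → E x t ∧ ∃ y, E y h ∧ ψ x y) ∧
    (∀ x, E x t → (E x d' ∨ ∀ y, E y h → ¬ ψ x y)) ∧ Good E ψ d h ∧
    ∀ β, E β α → ∃ k, IsH E β k ∧ NGood E ψ d k

theorem S2.next {ψ : X → X → Prop} (hψ : P1 E (fun v => ψ (v 0) (v 1))) (t : X)
    {f g : (ℕ → X) → X} (hf : Tm f) (hg : Tm g) : S2 E (fun v => Next E ψ t (f v) (g v)) := by
  refine S2.cls.of2 (P := fun a b => Next E ψ t a b) ?_ hf hg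
  have p : ∀ i j : ℕ, S2 E (fun v => ψ (v i) (v j)) := fun i j =>
    S2.ofP1 (P1.cls.of2 (P := ψ) hψ (Tm.var i) (Tm.var j))
  have n : ∀ i j : ℕ, S2 E (fun v => ¬ ψ (v i) (v j)) := fun i j =>
    S2.ofS1 (S1.cls.of2 (P := fun a b => ¬ ψ a b) hψ (Tm.var i) (Tm.var j))
  have m : ∀ i j : ℕ, S2 E (fun v => E (v i) (v j)) := fun i j =>
    S2.cls.d0 (D0.mem (Tm.var i) (Tm.var j))
  refine S2.ex (S2.ex (S2.cls.and (S2.cls.d0 (D0.ord (Tm.var 1))) (S2.cls.and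
    (S2.isH (Tm.var 1) (Tm.var 0)) (S2.cls.and ?_ (S2.cls.and ?_ (S2.cls.and ?_ ?_))))))
  · refine S2.cls.ball (Tm.var 3) (S2.cls.and (S2.cls.d0 (D0.mem (Tm.var 0) (Tm.const t)))
      (S2.cls.bex (Tm.var 1) (p 1 0)))
  · exact S2.cls.ball (Tm.const t) (S2.cls.or (m 0 4) (S2.cls.ball (Tm.var 1) (n 1 0)))
  · exact S2.cls.ball (Tm.var 2) (S2.cls.bex (Tm.var 0) (S2.cls.bex (Tm.var 2) (p 1 0)))
  · refine S2.cls.ball (Tm.var 1) (S2.ex (S2.cls.and (S2.isH (Tm.var 1) (Tm.var 0)) ?_))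
    exact S2.cls.bex (Tm.var 4) (S2.cls.ball (Tm.var 0) (S2.cls.ball (Tm.var 2) (n 1 0)))

theorem next_unique {ψ : X → X → Prop} {t d d1 d2 : X} (h1 : Next E ψ t d d1)
    (h2 : Next E ψ t d d2) : d1 = d2 := by
  obtain ⟨α1, k1, o1, e1, a1, b1, c1, m1⟩ := h1
  obtain ⟨α2, k2, o2, e2, a2, b2, c2, m2⟩ := h2
  rw [isH_iff] at e1 e2
  subst e1 e2
  rcases o1.tri o2 with h | rfl | h
  · obtain ⟨k, e, hk⟩ := m2 _ h
    rw [isH_iff] at e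
    subst e
    exact absurd c1 (ngood_iff.1 hk)
  · apply ext_ax (E := E)
    intro x
    constructor
    · intro hx
      obtain ⟨hxt, y, hy, hp⟩ := a1 x hx
      rcases b2 x hxt with h | h
      · exact h
      · exact absurd hp (h y hy)
    · intro hx
      obtain ⟨hxt, y, hy, hp⟩ := a2 x hx
      rcases b1 x hxt with h | h
      · exact h
      · exact absurd hp (h y hy)
  · obtain ⟨k, e, hk⟩ := m1 _ h
    rw [isH_iff] at e
    subst e
    exact absurd c2 (ngood_iff.1 hk)

theorem next_spec {ψ : X → X → Prop} {t d d' : X} (ht : TransSet E t) (hd : SubE E d t)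
    (h : Next E ψ t d d') :
    (∀ x, E x d' → E x t ∧ ∃ y, ψ x y) ∧ ∀ x, E x d → ∃ x', E x' x ∧ E x' d' := by
  obtain ⟨α, k, o, e, a, b, c, m⟩ := h
  refine ⟨fun x hx => ⟨(a x hx).1, (a x hx).2.imp fun y hy => hy.2⟩, fun x hx => ?_⟩
  obtain ⟨x', hx', y, hy, hp⟩ := c x hx
  refine ⟨x', hx', ?_⟩
  rcases b x' (ht x (hd x hx) x' hx') with h | h
  · exact h
  · exact absurd hp (h y hy)

theorem next_total {ψ : X → X → Prop} (hψ : P1 E (fun v => ψ (v 0) (v 1))) {t d : X}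
    (hmin : ∀ x, (∃ y, ψ x y) → ∃ x', E x' x ∧ ∃ y, ψ x' y)
    (hd : ∀ x, E x d → ∃ y, ψ x y) : ∃ d', Next E ψ t d d' := by
  have p : ∀ {f g : (ℕ → X) → X}, Tm f → Tm g → P1 E (fun v => ψ (f v) (g v)) := fun hf hg =>
    P1.cls.of2 (P := ψ) hψ hf hg
  obtain ⟨c, hc⟩ := P1.cls.coll (E := E) (Q := fun x y => ∃ x', E x' x ∧ ψ x' y)
    (P1.cls.bex (Tm.var 1) (p (Tm.var 0) (Tm.var 1))) d (by
      intro x hx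
      obtain ⟨x', hx', y, hy⟩ := hmin x (hd x hx)
      exact ⟨y, x', hx', hy⟩)
  obtain ⟨α, hα, hcα⟩ := sub_H (E := E) c
  obtain ⟨G, _, hG⟩ := S1.rel (E := E) (Q := fun β y => InH E β y)
    (S1.inH (Tm.var 0) (Tm.var 1)) (suc E α) (H E α)
  have hsub : ∀ β, E β (suc E α) → SubE E β α := by
    intro β hβ z hz
    rcases mem_suc.1 hβ with h | rfl
    · exact hα.1 β h z hz
    · exact hz
  have key : ∀ β, E β (suc E α) → ((∀ x, E x d → ∃ x', E x' x ∧ ∃ y, E y (H E α) ∧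
      (E (pr E β y) G ∧ ψ x' y)) ↔ Good E ψ d (H E β)) := by
    intro β hβ
    unfold Good
    refine forall_congr' fun x => imp_congr_right fun hx => exists_congr fun x' =>
      and_congr_right fun hx' => exists_congr fun y => ?_
    rw [hG, mem_H (E := E), mem_H (E := E)]
    constructor
    · rintro ⟨h1, h2, h3⟩
      exact ⟨h2.2.2, h3⟩
    · rintro ⟨h1, h3⟩
      exact ⟨h1.mono (hsub β hβ), ⟨hβ, h1.mono (hsub β hβ), h1⟩, h3⟩
  obtain ⟨β, hβ, h1, h2⟩ := min_of_sep (E := E) (w := suc E α) (P := fun β => (∀ x, E x d →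
    ∃ x', E x' x ∧ ∃ y, E y (H E α) ∧ (E (pr E β y) G ∧ ψ x' y)))
    (P1.sep (P1.cls.ball (Tm.const d) (P1.cls.bex (Tm.var 0) (P1.cls.bex (Tm.const _)
      (P1.cls.and (P1.cls.d0 (D0.memPr (Tm.const _) (Tm.var 3) (Tm.var 0)))
        (p (Tm.var 1) (Tm.var 0)))))) _) (by
      refine ⟨α, mem_suc.2 (Or.inr rfl), (key α (mem_suc.2 (Or.inr rfl))).2 ?_⟩
      intro x hx
      obtain ⟨y, hy, x', hx', hp⟩ := hc x hx
      exact ⟨x', hx', y, hcα y hy, hp⟩)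
  obtain ⟨d', hd'⟩ := P1.sep (E := E) (P := fun x => ∃ y, E y (H E β) ∧ ψ x y)
    (P1.cls.bex (Tm.const _) (p (Tm.var 1) (Tm.var 0))) t
  refine ⟨d', β, H E β, hα.suc.mem hβ, isH_iff.2 rfl, fun x hx => (hd' x).1 hx, fun x hx => ?_,
    (key β hβ).1 h1, fun γ hγ => ⟨H E γ, isH_iff.2 rfl, ?_⟩⟩
  · by_cases h : ∃ y, E y (H E β) ∧ ψ x y
    · exact Or.inl ((hd' x).2 ⟨hx, h⟩)
    · push Not at h
      exact Or.inr h
  · have hγ' := hα.suc.1 β hβ γ hγ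
    rw [ngood_iff, ← key γ hγ']
    exact h2 γ hγ hγ'


/-! ### The natural numbers -/

theorem succOf_iff {x s : X} : SuccOf E x s ↔ s = suc E x := by
  constructor
  · intro h
    exact ext_ax (E := E) fun z => by rw [mem_suc (E := E)]; exact h z
  · rintro rfl z
    exact mem_suc

theorem D0.eqSuc {f g : (ℕ → X) → X} (hf : Tm f) (hg : Tm g) :
    D0 E (fun v => f v = suc E (g v)) := by
  refine D0.cls.of2 (P := fun a b => a = suc E b) (D0.congr (P := fun v =>
    (∀ z, E z (v 0) → (E z (v 1) ∨ z = v 1)) ∧ (∀ z, E z (v 1) → E z (v 0)) ∧ E (v 1) (v 0)) ?_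
    fun v => ?_) hf hg
  · repeat (first | assumption | exact Tm.var _ | exact Tm.const _ | apply D0.pr | apply D0.memPr | apply D0.eqPr | apply D0.mem | apply D0.eq | apply D0.and | apply D0.or | apply D0.iff | apply D0.not | apply D0.bex | apply D0.ball | apply D0.imp)
  · rw [← succOf_iff]
    constructor
    · intro h
      exact ⟨fun z => (h z).1, fun z hz => (h z).2 (Or.inl hz), (h _).2 (Or.inr rfl)⟩
    · rintro ⟨h1, h2, h3⟩ z
      exact ⟨h1 z, fun h => h.elim (h2 z) (fun e => e ▸ h3)⟩

theorem D0.ind_set {f : (ℕ → X) → X} (hf : Tm f) : D0 E (fun v => InductiveSet E (f v)) := by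
  refine D0.cls.of1 (P := fun a => InductiveSet E a) (D0.congr (P := fun v =>
    (∃ e, E e (v 0) ∧ ∀ z, E z e → ¬ z = z) ∧ ∀ x, E x (v 0) → ∃ s, E s (v 0) ∧ s = suc E x) ?_
    fun v => ?_) hf
  · repeat (first | exact Tm.var _ | apply D0.eqSuc | apply D0.eq | apply D0.and | apply D0.not | apply D0.bex | apply D0.ball)
  · simp only [InductiveSet, succOf_iff, not_true_eq_false, imp_false]

theorem exists_omega (E : X → X → Prop) [hM : SetMod E] : ∃ w, IsOmega E w := by
  obtain ⟨a, ha⟩ := inf_ax E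
  obtain ⟨w, hw⟩ := D0.sep (E := E) (P := fun x => ∀ b, E b (pow E a) → (InductiveSet E b → E x b))
    (D0.ball (Tm.const _) (D0.imp (D0.ind_set (Tm.var _)) (D0.mem (Tm.var _) (Tm.var _)))) a
  refine ⟨w, ⟨?_, ?_⟩, ?_⟩
  · obtain ⟨e, he, he'⟩ := ha.1
    refine ⟨e, (hw e).2 ⟨he, fun b hb hbi => ?_⟩, he'⟩
    obtain ⟨e2, h2, h2'⟩ := hbi.1
    have : e = e2 := ext_ax (E := E) fun z => ⟨fun h => absurd h (he' z), fun h => absurd h (h2' z)⟩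
    rwa [this]
  · intro x hx
    obtain ⟨hxa, hx⟩ := (hw x).1 hx
    obtain ⟨s, hs, hs'⟩ := ha.2 x hxa
    refine ⟨s, (hw s).2 ⟨hs, fun b hb hbi => ?_⟩, hs'⟩
    obtain ⟨s2, h2, h2'⟩ := hbi.2 x (hx b hb hbi)
    rw [succOf_iff] at hs' h2'
    rwa [hs', ← h2']
  · intro a' ha' x hx
    obtain ⟨b, hb⟩ := D0.sep (E := E) (P := fun x => E x a') (by repeat (first | assumption | exact Tm.var _ | exact Tm.const _ | apply D0.pr | apply D0.memPr | apply D0.eqPr | apply D0.mem | apply D0.eq | apply D0.and | apply D0.or | apply D0.iff | apply D0.not | apply D0.bex | apply D0.ball | apply D0.imp)) a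
    refine ((hb x).1 (((hw x).1 hx).2 b (mem_pow.2 fun z hz => ((hb z).1 hz).1) ⟨?_, ?_⟩)).2
    · obtain ⟨e, he, he'⟩ := ha.1
      obtain ⟨e2, h2, h2'⟩ := ha'.1
      have : e = e2 :=
        ext_ax (E := E) fun z => ⟨fun h => absurd h (he' z), fun h => absurd h (h2' z)⟩
      exact ⟨e, (hb e).2 ⟨he, by rwa [this]⟩, he'⟩
    · intro y hy
      obtain ⟨s, hs, hs'⟩ := ha.2 y ((hb y).1 hy).1
      obtain ⟨s2, h2, h2'⟩ := ha'.2 y ((hb y).1 hy).2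
      refine ⟨s, (hb s).2 ⟨hs, ?_⟩, hs'⟩
      rw [succOf_iff] at hs' h2'
      rwa [hs', ← h2']

theorem omega_seq (hstd : OmegaStandard E) : ∃ w, ∃ f : ℕ → X, (∀ n, E (f n) w) ∧
    (∀ x, E x w → ∃ n, x = f n) ∧ (∀ z, ¬ E z (f 0)) ∧ ∀ n, f (n + 1) = suc E (f n) := by
  obtain ⟨w, hw⟩ := exists_omega E
  obtain ⟨f, h1, h2, h3⟩ := hstd w hw
  refine ⟨w, f, h1, h2, ?_, fun n => ?_⟩
  · obtain ⟨e, he, he'⟩ := hw.1.1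
    obtain ⟨n, rfl⟩ := h2 e he
    rcases Nat.eq_zero_or_pos n with rfl | h
    · exact he'
    · exact absurd ((h3 0 n).2 h) (he' _)
  · obtain ⟨s, hs, hs'⟩ := hw.1.2 (f n) (h1 n)
    rw [succOf_iff] at hs'
    obtain ⟨k, rfl⟩ := h2 s hs
    have a1 : n < k := (h3 n k).1 (by rw [hs']; exact mem_suc.2 (Or.inr rfl))
    have a2 : ¬ n + 1 < k := by
      intro h
      have := (h3 (n + 1) k).2 h
      rw [hs', mem_suc (E := E)] at this
      rcases this with h | h
      · have := (h3 _ _).1 h; omega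
      · have := (h3 n (n + 1)).2 (by omega)
        rw [h] at this
        exact irr this
    have : k = n + 1 := by omega
    rw [← this, hs']

theorem suc_inj {a b : X} (h : suc E a = suc E b) : a = b := by
  have h1 : E a (suc E b) := h ▸ mem_suc.2 (Or.inr rfl)
  have h2 : E b (suc E a) := h ▸ mem_suc.2 (Or.inr rfl)
  rcases mem_suc.1 h1 with h1 | h1
  · rcases mem_suc.1 h2 with h2 | h2
    · exact (asym h1 h2).elim
    · exact h2.symm
  · exact h1

/-! ### The iteration -/

def Appr (E : X → X → Prop) [hM : SetMod E] (N : X → X → Prop) (o b g : X) : Prop :=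
  ∀ q, E q g → ∃ k, ∃ h, q = pr E k h ∧ ((k = o ∧ h = b) ∨
    ∃ k', ∃ h', E (pr E k' h') g ∧ k = suc E k' ∧ N h' h)

theorem appr_uniq {N : X → X → Prop} (hN : ∀ a b c, N a b → N a c → b = c) {f D : ℕ → X}
    (f0 : ∀ z, ¬ E z (f 0)) (fs : ∀ n, f (n + 1) = suc E (f n))
    (hD : ∀ n, N (D n) (D (n + 1))) {g : X} (hg : Appr E N (f 0) (D 0) g) :
    ∀ n y, E (pr E (f n) y) g → y = D n := by
  have ne : ∀ k, f 0 ≠ suc E k := fun k h => f0 k (h ▸ mem_suc.2 (Or.inr rfl))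
  intro n
  induction n with
  | zero =>
    intro y hy
    obtain ⟨k, h, e, ⟨_, h1⟩ | ⟨k', h', _, h1, _⟩⟩ := hg _ hy
    · rw [(pr_inj e).2, h1]
    · exact absurd ((pr_inj e).1.trans h1) (ne _)
  | succ n ih =>
    intro y hy
    obtain ⟨k, h, e, ⟨h1, _⟩ | ⟨k', h', h0, h1, h2⟩⟩ := hg _ hy
    · exact absurd (h1.symm.trans ((pr_inj e).1.symm.trans (fs n))) (ne _)
    · obtain ⟨e1, rfl⟩ := pr_inj e
      have : f n = k' := suc_inj (E := E) ((fs n).symm.trans (e1.trans h1))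
      subst this
      rw [ih h' h0] at h2
      exact hN _ _ _ h2 (hD n)

theorem appr_ex {N : X → X → Prop} {f D : ℕ → X}
    (fs : ∀ n, f (n + 1) = suc E (f n))
    (hD : ∀ n, N (D n) (D (n + 1))) (n : ℕ) :
    ∃ g, Appr E N (f 0) (D 0) g ∧ E (pr E (f n) (D n)) g := by
  induction n with
  | zero =>
    refine ⟨sg E (pr E (f 0) (D 0)), fun q hq => ?_, mem_sg.2 rfl⟩
    exact ⟨_, _, mem_sg.1 hq, Or.inl ⟨rfl, rfl⟩⟩
  | succ n ih =>
    obtain ⟨g, hg, hn⟩ := ih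
    refine ⟨bun E g (sg E (pr E (f (n + 1)) (D (n + 1)))), fun q hq => ?_,
      mem_bun.2 (Or.inr (mem_sg.2 rfl))⟩
    rw [mem_bun (E := E), mem_sg (E := E)] at hq
    rcases hq with hq | rfl
    · obtain ⟨k, h, e, h1 | ⟨k', h', h0, h1⟩⟩ := hg _ hq
      · exact ⟨k, h, e, Or.inl h1⟩
      · exact ⟨k, h, e, Or.inr ⟨k', h', mem_bun.2 (Or.inl h0), h1⟩⟩
    · exact ⟨_, _, rfl, Or.inr ⟨f n, D n, mem_bun.2 (Or.inl hn), fs n, hD n⟩⟩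

theorem S2.appr {N : X → X → Prop} (hN : S2 E (fun v => N (v 0) (v 1))) (o b : X) :
    S2 E (fun v => ∃ g, Appr E N o b g ∧ E (pr E (v 0) (v 1)) g) := by
  refine S2.ex (S2.cls.and ?_ (S2.cls.d0 (D0.memPr (Tm.var 0) (Tm.var 1) (Tm.var 2))))
  refine S2.cls.ball (Tm.var 0) (S2.ex (S2.ex (S2.cls.and
    (S2.cls.d0 (D0.eqPr (Tm.var 2) (Tm.var 1) (Tm.var 0))) (S2.cls.or (S2.cls.d0 ?_) ?_))))
  · exact D0.and (D0.eq (Tm.var 1) (Tm.const _)) (D0.eq (Tm.var 0) (Tm.const _))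
  · exact S2.ex (S2.ex (S2.cls.and (S2.cls.d0 (D0.memPr (Tm.var 5) (Tm.var 1) (Tm.var 0)))
      (S2.cls.and (S2.cls.d0 (D0.eqSuc (Tm.var 3) (Tm.var 1)))
        (S2.cls.of2 (P := N) hN (Tm.var 0) (Tm.var 2)))))

theorem S2.foundation (hstd : OmegaStandard E) {C : X → Prop} (hC : S2 E (fun v => C (v 0)))
    {x0 : X} (hx0 : C x0) : ∃ y, C y ∧ ∀ x, E x y → ¬ C x := by
  by_contra hcon
  push Not at hcon
  obtain ⟨ψ, hψ, hCψ⟩ := S2.matrix1 hC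
  have hmin : ∀ x, (∃ y, ψ x y) → ∃ x', E x' x ∧ ∃ y, ψ x' y := by
    intro x hx
    obtain ⟨x', h1, h2⟩ := hcon x ((hCψ x).2 hx)
    exact ⟨x', h1, (hCψ x').1 h2⟩
  obtain ⟨t, ht, hx0t⟩ := tco_ax E (sg E x0)
  obtain ⟨w, f, fw, wf, f0, fs⟩ := omega_seq hstd
  let OK : X → Prop := fun d => ∀ x, E x d → E x t ∧ ∃ y, ψ x y
  have step : ∀ d : {d // OK d}, ∃ d' : {d // OK d}, Next E ψ t d.1 d'.1 := by
    rintro ⟨d, hd⟩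
    obtain ⟨d', hd'⟩ := next_total hψ (t := t) (d := d) hmin fun x hx => (hd x hx).2
    exact ⟨⟨d', (next_spec ht (fun x hx => (hd x hx).1) hd').1⟩, hd'⟩
  choose nx hnx using step
  have ok0 : OK (sg E x0) := by
    intro x hx
    rw [mem_sg (E := E)] at hx
    subst hx
    exact ⟨hx0t x (mem_sg.2 rfl), (hCψ x).1 hx0⟩
  let D' : ℕ → {d // OK d} := fun n => Nat.rec ⟨sg E x0, ok0⟩ (fun _ d => nx d) n
  let D : ℕ → X := fun n => (D' n).1
  have hD : ∀ n, Next E ψ t (D n) (D (n + 1)) := fun n => hnx (D' n)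
  have hOK : ∀ n, OK (D n) := fun n => (D' n).2
  have hS := S2.appr (S2.next hψ t (Tm.var 0) (Tm.var 1)) (f 0) (D 0)
  obtain ⟨ρ, hρ, hρ'⟩ := S2.matrix2 (C := fun m y => ∃ g, Appr E (Next E ψ t) (f 0) (D 0) g ∧
    E (pr E m y) g) hS
  have hR : ∀ n y, (∃ z, ρ (f n) y z) ↔ y = D n := by
    intro n y
    rw [← hρ']
    constructor
    · rintro ⟨g, hg, hy⟩
      exact appr_uniq (N := Next E ψ t) (fun _ _ _ h1 h2 => next_unique h1 h2) f0 fs hD hg n y hy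
    · rintro rfl
      exact appr_ex fs hD n
  have p : ∀ i j k : ℕ, P1 E (fun v => ρ (v i) (v j) (v k)) := fun i j k =>
    P1.cls.of3 (P := ρ) hρ (Tm.var _) (Tm.var _) (Tm.var _)
  obtain ⟨c, hc⟩ := P1.cls.coll (E := E) (Q := fun m c => ∃ y, E y c ∧ ∃ e, E e c ∧ ρ m y e)
    (P1.cls.bex (Tm.var 0) (P1.cls.bex (Tm.var 1) (p 3 1 0))) w (by
      intro m hm
      obtain ⟨n, rfl⟩ := wf m hm
      obtain ⟨e, he⟩ := (hR n (D n)).2 rfl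
      exact ⟨upr E (D n) e, D n, mem_upr.2 (Or.inl rfl), e, mem_upr.2 (Or.inr rfl), he⟩)
  obtain ⟨S, hS⟩ := P1.sep (E := E) (P := fun x => ∃ m, E m w ∧ ∃ y, E y (un E c) ∧
    ∃ e, E e (un E c) ∧ (ρ m y e ∧ E x y))
    (P1.cls.bex (Tm.const _) (P1.cls.bex (Tm.const _) (P1.cls.bex (Tm.const _)
      (P1.cls.and (p 2 1 0) (P1.cls.d0 (D0.mem (Tm.var 3) (Tm.var 1))))))) t
  have hS' : ∀ x, E x S ↔ ∃ n, E x (D n) := by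
    intro x
    rw [hS]
    constructor
    · rintro ⟨_, m, hm, y, _, e, _, h, hx⟩
      obtain ⟨n, rfl⟩ := wf m hm
      rw [(hR n y).1 ⟨e, h⟩] at hx
      exact ⟨n, hx⟩
    · rintro ⟨n, hx⟩
      obtain ⟨b, hb, y, hy, e, he, h⟩ := hc (f n) (fw n)
      have := (hR n y).1 ⟨e, h⟩
      subst this
      exact ⟨(hOK n x hx).1, f n, fw n, D n, mem_un.2 ⟨b, hb, hy⟩, e, mem_un.2 ⟨b, hb, he⟩, h, hx⟩
  obtain ⟨y, hy, hy'⟩ := found_ax E S ⟨x0, (hS' x0).2 ⟨0, mem_sg.2 rfl⟩⟩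
  obtain ⟨n, hn⟩ := (hS' y).1 hy
  obtain ⟨x', h1, h2⟩ := (next_spec ht (fun x hx => (hOK n x hx).1) (hD n)).2 y hn
  exact hy' x' h1 ((hS' x').2 ⟨n + 1, h2⟩)

theorem final_aux (hstd : OmegaStandard E) : FoundationScheme E Sigma1PC := by
  rintro n φ ⟨ψ, hψ, rfl⟩ p ⟨x0, hx0⟩
  refine S2.foundation hstd (C := fun x => (SF.ex ψ).Eval E (Fin.snoc p x)) ?_ hx0
  have h := (delta0P_S2 (E := E) ψ hψ (Fin.snoc (Fin.snoc (fun i _ => p i) (fun v => v 1) :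
    Fin (n + 1) → (ℕ → X) → X) (fun v => v 0)) (by
      intro i
      refine Fin.lastCases ?_ (fun j => ?_) i
      · simpa using Tm.var 0
      · refine Fin.lastCases ?_ (fun j => ?_) j
        · simpa using Tm.var 1
        · simpa using Tm.const _)).1
  refine S2.ex (Q := fun v y => ψ.Eval E (Fin.snoc (Fin.snoc p (v 0) : Fin (n + 1) → X) y))
    (h.congr fun v => ?_)
  apply iff_of_eq
  congr 1
  funext i
  refine Fin.lastCases ?_ (fun j => ?_) i
  · simp
  · refine Fin.lastCases ?_ (fun j => ?_) j
    · simp [tl]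
    · simp

end Helper

/-- every `ω`-standard model of `MOST + Π₁-Collection` satisfies
`Σ₁^𝒫`-Foundation. -/
theorem sigma1P_foundation_in_omega_standard_MOST (X : Type u) (E : X → X → Prop)
    (hM : ModelMOST E) (hColl : CollectionScheme E Pi1C)
    (hstd : OmegaStandard E) : FoundationScheme E Sigma1PC := by
  haveI : SetMod E := ⟨hM, hColl⟩
  exact final_aux hstd
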